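/- There exists a constant C > 0 such that for every f ∈ H¹ the heat maximal function Mf belongs to L¹(ρ) and ‖Mf‖₁ ≤ C‖f‖_{H¹}. -/

import Mathlib

open MeasureTheory Real Filter Set
open scoped ENNReal

noncomputable section

/-- The group `G = ℝ² ⋊ ℝ⁺`, realized as triples `(x₁, x₂, a)` (only `a > 0` is relevant). -/
abbrev G : Type := ℝ × ℝ × ℝ

/-- Group product `(x₁,x₂,a)·(x₁',x₂',a') = (x₁+a x₁', x₂+a x₂', a a')`. -/
def gMul (x y : G) : G := (x.1 + x.2.2 * y.1, x.2.1 + x.2.2 * y.2.1, x.2.2 * y.2.2)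

/-- Group inverse `(x₁,x₂,a)⁻¹ = (−x₁/a, −x₂/a, 1/a)`. -/
def gInv (x : G) : G := (-x.1 / x.2.2, -x.2.1 / x.2.2, 1 / x.2.2)

/-- The identity `e = (0,0,1)`. -/
def gE : G := (0, 0, 1)

/-- The right Haar measure `dρ = a⁻¹ dx₁ dx₂ da` (supported where `a > 0`). -/
def ρG : Measure G :=
  (volume : Measure G).withDensity fun x => ENNReal.ofReal (if 0 < x.2.2 then x.2.2⁻¹ else 0)

/-- The modular function `δ(x₁,x₂,a) = a⁻²`. -/
def deltaG (x : G) : ℝ := (x.2.2 ^ 2)⁻¹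

/-- `|x| = √(x₁² + x₂²)`. -/
def normG (x : G) : ℝ := Real.sqrt (x.1 ^ 2 + x.2.1 ^ 2)

/-- `cosh r(x) = (a + a⁻¹ + a⁻¹|x|²)/2`. -/
def coshArg (x : G) : ℝ := (x.2.2 + x.2.2⁻¹ + x.2.2⁻¹ * (x.1 ^ 2 + x.2.1 ^ 2)) / 2

/-- `r(x) ≥ 0` is determined by `cosh r(x) = coshArg x`; explicitly `r = arcosh (coshArg x)`. -/
def rG (x : G) : ℝ := Real.log (coshArg x + Real.sqrt (coshArg x ^ 2 - 1))

/-- The left-invariant distance `d(x,y) = r(x⁻¹y)`. -/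
def dG (x y : G) : ℝ := rG (gMul (gInv x) y)

/-- The heat kernel
`p_t(x) = (8π^{3/2})⁻¹ δ(x)^{1/2} (r(x)/sinh r(x)) t^{−3/2} exp(−r(x)²/(4t))`,
with `r/sinh r := 1` at `x = e`. -/
def heatK (t : ℝ) (x : G) : ℝ :=
  (8 * Real.pi ^ ((3 : ℝ)/2))⁻¹ * Real.sqrt (deltaG x) *
    (if rG x = 0 then 1 else rG x / Real.sinh (rG x)) *
    t ^ (-(3 : ℝ)/2) * Real.exp (-(rG x ^ 2) / (4 * t))

/-- Convolution `f ∗ p_t(x) = ∫ f(xy⁻¹) p_t(y) dρ(y)`. -/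
def convHeat (f : G → ℝ) (t : ℝ) (x : G) : ℝ := ∫ y, f (gMul x (gInv y)) * heatK t y ∂ρG

/-- The heat maximal operator `Mf(x) = sup_{t>0} |f ∗ p_t(x)|` (valued in `ℝ≥0∞`). -/
def maxHeat (f : G → ℝ) (x : G) : ℝ≥0∞ :=
  ⨆ (t : ℝ) (_ : 0 < t), ENNReal.ofReal |convHeat f t x|

/-- Calderón–Zygmund sets. -/
def IsCZ (R : Set G) : Prop :=
  ∃ c : G, ∃ L r : ℝ, 0 < c.2.2 ∧ 0 < L ∧ 0 < r ∧
    R = Set.Icc (c.1 - L/2) (c.1 + L/2) ×ˢ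
        (Set.Icc (c.2.1 - L/2) (c.2.1 + L/2) ×ˢ
         Set.Icc (c.2.2 * Real.exp (-r)) (c.2.2 * Real.exp r)) ∧
    (r < 1 → Real.exp 2 * c.2.2 * r ≤ L ∧ L < Real.exp 8 * c.2.2 * r) ∧
    (1 ≤ r → c.2.2 * Real.exp (2*r) ≤ L ∧ L < c.2.2 * Real.exp (8*r))

/-- Atoms: `A ∈ L¹(ρ)` supported in a Calderón–Zygmund set `R`, with
`‖A‖_∞ ≤ ρ(R)⁻¹` and `∫ A dρ = 0`. -/
def IsAtomG (A : G → ℝ) : Prop :=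
  Integrable A ρG ∧
  ∃ R : Set G, IsCZ R ∧ (∀ x ∉ R, A x = 0) ∧
    eLpNorm A ⊤ ρG ≤ (ρG R)⁻¹ ∧
    ∫ x, A x ∂ρG = 0

/-- `f = Σ_j lam_j A_j` with atoms `A_j`, `Σ_j |lam_j| < ∞`, converging in `L¹(ρ)`. -/
def IsH1Decomp (f : G → ℝ) (lam : ℕ → ℝ) (A : ℕ → G → ℝ) : Prop :=
  (∀ j, IsAtomG (A j)) ∧ Summable (fun j => |lam j|) ∧
  Tendsto (fun N => eLpNorm (fun x => f x - ∑ j ∈ Finset.range N, lam j * A j x) 1 ρG)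
    atTop (nhds 0)

/-- The Hardy space `H¹`. -/
def MemH1 (f : G → ℝ) : Prop :=
  Integrable f ρG ∧ ∃ lam A, IsH1Decomp f lam A

/-- `‖f‖_{H¹} = inf Σ_j |lam_j|` over all atomic decompositions. -/
def H1norm (f : G → ℝ) : ℝ :=
  sInf {s | ∃ lam A, IsH1Decomp f lam A ∧ s = ∑' j, |lam j|}

/-- The left-invariant vector field `X₀ = a ∂_a`. -/
def X0 (f : G → ℝ) (x : G) : ℝ := x.2.2 * deriv (fun s => f (x.1, x.2.1, s)) x.2.2

/-- The left-invariant vector field `X₁ = a ∂_{x₁}`. -/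
def X1 (f : G → ℝ) (x : G) : ℝ := x.2.2 * deriv (fun s => f (s, x.2.1, x.2.2)) x.1

/-- The left-invariant vector field `X₂ = a ∂_{x₂}`. -/
def X2 (f : G → ℝ) (x : G) : ℝ := x.2.2 * deriv (fun s => f (x.1, s, x.2.2)) x.2.1

/-- `‖∇p_t(x)‖`, the Euclidean norm of `(X₀p_t, X₁p_t, X₂p_t)` at `x`. -/
def gradHeatNorm (t : ℝ) (x : G) : ℝ :=
  Real.sqrt (X0 (heatK t) x ^ 2 + X1 (heatK t) x ^ 2 + X2 (heatK t) x ^ 2)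

/-- The Poisson kernel `q_t(x) = π⁻² δ(x)^{1/2} (r(x)/sinh r(x)) · t/(t²+r(x)²)²`. -/
def poissonK (t : ℝ) (x : G) : ℝ :=
  (Real.pi ^ 2)⁻¹ * Real.sqrt (deltaG x) *
    (if rG x = 0 then 1 else rG x / Real.sinh (rG x)) *
    (t / (t ^ 2 + rG x ^ 2) ^ 2)

/-- Convolution `f ∗ q_t(x) = ∫ f(xy⁻¹) q_t(y) dρ(y)`. -/
def convPoisson (f : G → ℝ) (t : ℝ) (x : G) : ℝ := ∫ y, f (gMul x (gInv y)) * poissonK t y ∂ρG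

/-- The Poisson maximal operator `M̃f(x) = sup_{t>0} |f ∗ q_t(x)|`. -/
def maxPoisson (f : G → ℝ) (x : G) : ℝ≥0∞ :=
  ⨆ (t : ℝ) (_ : 0 < t), ENNReal.ofReal |convPoisson f t x|

/-- `G_{r₁}(x) = sup_{z ∈ B(x,r₁/2)} sup_{t>0} ‖∇p_t(z)‖`. -/
def Gsup (r1 : ℝ) (x : G) : ℝ≥0∞ :=
  ⨆ (z : G) (_ : 0 < z.2.2 ∧ dG x z < r1 / 2) (t : ℝ) (_ : 0 < t),
    ENNReal.ofReal (gradHeatNorm t z)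

/-- `R₀ = [−1,1]×[−1,1]×[e⁻¹,e]`. -/
def R0set : Set G :=
  Set.Icc (-1 : ℝ) 1 ×ˢ (Set.Icc (-1 : ℝ) 1 ×ˢ Set.Icc (Real.exp (-1)) (Real.exp 1))

/-- `R_L = [L−1,L+1]×[−1,1]×[e⁻¹,e]`. -/
def RLset (L : ℝ) : Set G :=
  Set.Icc (L - 1) (L + 1) ×ˢ (Set.Icc (-1 : ℝ) 1 ×ˢ Set.Icc (Real.exp (-1)) (Real.exp 1))

/-- `f_L = χ_{R_L} − χ_{R₀}`. -/
def fL (L : ℝ) : G → ℝ := fun x =>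
  (RLset L).indicator (fun _ => (1 : ℝ)) x - R0set.indicator (fun _ => (1 : ℝ)) x

/-- The mean of `g` over `R` with respect to `ρ`. -/
def czMean (g : G → ℝ) (R : Set G) : ℝ := (∫ x in R, g x ∂ρG) / (ρG R).toReal

/-- `‖g‖_{BMO} = sup_R ρ(R)⁻¹ ∫_R |g − g_R| dρ` over Calderón–Zygmund sets `R`. -/
def czBMO (g : G → ℝ) : ℝ≥0∞ :=
  ⨆ (R : Set G) (_ : IsCZ R),
    (ρG R)⁻¹ * ∫⁻ x in R, ENNReal.ofReal |g x - czMean g R| ∂ρG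

/-- `‖h‖_{BMO(ℝ)} = sup_Q |Q|⁻¹ ∫_Q |h − h_Q|` over bounded intervals `Q ⊂ ℝ`. -/
def lineBMO (h : ℝ → ℝ) : ℝ≥0∞ :=
  ⨆ (a : ℝ) (b : ℝ) (_ : a < b),
    (ENNReal.ofReal (b - a))⁻¹ *
      ∫⁻ s in Set.Icc a b, ENNReal.ofReal |h s - (∫ u in Set.Icc a b, h u) / (b - a)|

/-- `2R₀ = [−2,2]×[−2,2]×[e⁻²,e²]`. -/
def twoR0set : Set G :=
  Set.Icc (-2 : ℝ) 2 ×ˢ (Set.Icc (-2 : ℝ) 2 ×ˢ Set.Icc (Real.exp (-2)) (Real.exp 2))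

/-- The set `{x₁ > 3, |x₂| < 1, e⁻¹ < a < e}`. -/
def domSpecial : Set G :=
  {x : G | 3 < x.1 ∧ |x.2.1| < 1 ∧ Real.exp (-1) < x.2.2 ∧ x.2.2 < Real.exp 1}

/-- The function equal to `1/(x₁ (log x₁)^{3/2})` on `{x₁ > 3, |x₂| < 1, e⁻¹ < a < e}`,
to `c₀` on `R₀`, and `0` elsewhere. -/
def fSpecial (c0 : ℝ) : G → ℝ := fun x =>
  domSpecial.indicator (fun y => (y.1 * Real.log y.1 ^ ((3 : ℝ)/2))⁻¹) x
    + R0set.indicator (fun _ => c0) x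

/-!
In terms of the last coordinates `a` of `x` and `b` of `y` and of the horizontal squared distance
`q`, the kernel of `f ↦ f ∗ p_t` is a constant times `g_t(s) / (ab sinh s)`, where `s = d(x, y)`,
`cosh s = (a² + b² + q) / (2ab)` and `g_t(s) = s t^{-3/2} exp(-s²/4t)`. Uniformly in `t` one has
`g_t(s) = O(s⁻²)` and `g_t'(s) = O(s⁻³)`, so all suprema over `t` are taken before integrating.

By left translation it suffices to bound `‖MA‖₁` for atoms `A` supported in a box of side `L` and
vertical extent `r` centred at `e`. Let first `r ≥ 1`, so that `log L ≍ r`.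
* Near the box, `MA ≤ ‖A‖_∞` because the heat kernel has mass one.
* In the cusp `log a ≤ -20r` the kernel is `O((log a)⁻² (e^{-2r} + q)⁻¹)`.
  Its integral over the horizontal plane costs a factor `log L ≍ r`, so the size of `A` yields
  `MA = O(r L⁻² (log a)⁻²)`; integrating over `log a ≤ -20r` gains the factor `r` back.
* Where `log a ≥ 20r` the kernel is `O(a⁻²)`, which beats the area `L² ≤ e^{16r}`.
* Where `|x| ≥ e³⁰L` the size of the kernel only gives the divergent integral of `1/(|x|² log |x|)`;
  the mean zero property gains a factor `r / log |x|`, which makes it converge.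

If `r < 1`, the last three regions are treated as for an atom of unit scale, and in the remaining
bounded region the kernel satisfies the Calderón–Zygmund estimates of three-dimensional Euclidean
space.
-/

section Majorized

variable {α β ι : Type*} [MeasurableSpace α] [MeasurableSpace β]

/-- The upper integral of `Φ` with respect to `μ` is at most `C`. Suprema over an uncountable
family, such as maximal functions, need not be measurable, and on nonmeasurable functions the lower
integral `∫⁻` fails to be subadditive; hence the explicit measurable majorant. -/
def IsMajorized (Φ : α → ℝ≥0∞) (μ : Measure α) (C : ℝ≥0∞) : Prop :=
  ∃ B : α → ℝ≥0∞, Measurable B ∧ Φ ≤ᵐ[μ] B ∧ ∫⁻ x, B x ∂μ ≤ C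

variable {μ : Measure α} {Φ Ψ : α → ℝ≥0∞} {C D : ℝ≥0∞}

lemma IsMajorized.lintegral_le (h : IsMajorized Φ μ C) : ∫⁻ x, Φ x ∂μ ≤ C := by
  obtain ⟨B, -, hΦB, hB⟩ := h
  exact (lintegral_mono_ae hΦB).trans hB

lemma IsMajorized.mono (h : IsMajorized Ψ μ C) (hΦ : Φ ≤ᵐ[μ] Ψ) (hCD : C ≤ D) :
    IsMajorized Φ μ D := by
  obtain ⟨B, hBm, hΨB, hB⟩ := h
  exact ⟨B, hBm, hΦ.trans hΨB, hB.trans hCD⟩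

lemma IsMajorized.const_mul (h : IsMajorized Φ μ C) (c : ℝ≥0∞) :
    IsMajorized (fun x => c * Φ x) μ (c * C) := by
  obtain ⟨B, hBm, hΦB, hB⟩ := h
  refine ⟨fun x => c * B x, hBm.const_mul c, ?_, ?_⟩
  · filter_upwards [hΦB] with x hx
    gcongr
  · rw [lintegral_const_mul c hBm]
    gcongr

lemma IsMajorized.tsum [Countable ι] {Φ : ι → α → ℝ≥0∞} {C : ι → ℝ≥0∞}
    (h : ∀ i, IsMajorized (Φ i) μ (C i)) :
    IsMajorized (fun x => ∑' i, Φ i x) μ (∑' i, C i) := by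
  choose B hBm hΦB hB using h
  refine ⟨fun x => ∑' i, B i x, Measurable.tsum hBm, ?_, ?_⟩
  · filter_upwards [ae_all_iff.2 hΦB] with x hx
    exact ENNReal.tsum_le_tsum hx
  · rw [lintegral_tsum fun i => (hBm i).aemeasurable]
    exact ENNReal.tsum_le_tsum hB

lemma IsMajorized.restrict_union {s t : Set α} (hs : MeasurableSet s) (ht : MeasurableSet t)
    (h₁ : IsMajorized Φ (μ.restrict s) C) (h₂ : IsMajorized Φ (μ.restrict t) D) :
    IsMajorized Φ (μ.restrict (s ∪ t)) (C + D) := by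
  obtain ⟨B₁, hm₁, hΦ₁, hB₁⟩ := h₁
  obtain ⟨B₂, hm₂, hΦ₂, hB₂⟩ := h₂
  refine ⟨s.indicator B₁ + t.indicator B₂, (hm₁.indicator hs).add (hm₂.indicator ht), ?_, ?_⟩
  · rw [EventuallyLE, ae_restrict_iff' (hs.union ht)]
    filter_upwards [(ae_restrict_iff' hs).1 hΦ₁, (ae_restrict_iff' ht).1 hΦ₂] with x h₁ h₂ hx
    rcases hx with hx | hx
    · exact (h₁ hx).trans (by simp [hx])
    · exact (h₂ hx).trans (by simp [hx])
  · calc ∫⁻ x in s ∪ t, (s.indicator B₁ + t.indicator B₂) x ∂μ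
        ≤ ∫⁻ x, (s.indicator B₁ + t.indicator B₂) x ∂μ := setLIntegral_le_lintegral _ _
      _ = ∫⁻ x in s, B₁ x ∂μ + ∫⁻ x in t, B₂ x ∂μ := by
          rw [← lintegral_indicator hs, ← lintegral_indicator ht]
          exact lintegral_add_left (hm₁.indicator hs) _
      _ ≤ C + D := add_le_add hB₁ hB₂

lemma IsMajorized.comp_of_map {f : β → α} {ν : Measure β} (hf : Measurable f)
    (h : IsMajorized Φ (ν.map f) C) : IsMajorized (Φ ∘ f) ν C := by
  obtain ⟨B, hBm, hΦB, hB⟩ := h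
  exact ⟨B ∘ f, hBm.comp hf, ae_of_ae_map hf.aemeasurable hΦB, by rwa [lintegral_map hBm hf] at hB⟩

lemma IsMajorized.smul_measure (h : IsMajorized Φ μ C) (c : ℝ≥0∞) :
    IsMajorized Φ (c • μ) (c * C) := by
  obtain ⟨B, hBm, hΦB, hB⟩ := h
  refine ⟨B, hBm, Measure.smul_absolutelyContinuous.ae_le hΦB, ?_⟩
  rw [lintegral_smul_measure, smul_eq_mul]
  gcongr

end Majorized

section Integrals

lemma lintegral_Ioi_eq_of_hasDerivAt_of_continuousWithinAt {g g' : ℝ → ℝ} {a l : ℝ}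
    (hcont : ContinuousWithinAt g (Ici a) a) (hderiv : ∀ x ∈ Ioi a, HasDerivAt g (g' x) x)
    (hpos : ∀ x ∈ Ioi a, 0 ≤ g' x) (hlim : Tendsto g atTop (nhds l)) :
    ∫⁻ x in Ioi a, ENNReal.ofReal (g' x) = ENNReal.ofReal (l - g a) := by
  rw [← integral_Ioi_of_hasDerivAt_of_nonneg hcont hderiv hpos hlim,
    ofReal_integral_eq_lintegral_ofReal
      (integrableOn_Ioi_deriv_of_nonneg hcont hderiv hpos hlim)]
  exact (ae_restrict_iff' measurableSet_Ioi).2 (Eventually.of_forall hpos)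

lemma lintegral_Ioi_eq_of_hasDerivAt {g g' : ℝ → ℝ} {a l : ℝ}
    (hderiv : ∀ x ∈ Ici a, HasDerivAt g (g' x) x) (hpos : ∀ x ∈ Ioi a, 0 ≤ g' x)
    (hlim : Tendsto g atTop (nhds l)) :
    ∫⁻ x in Ioi a, ENNReal.ofReal (g' x) = ENNReal.ofReal (l - g a) :=
  lintegral_Ioi_eq_of_hasDerivAt_of_continuousWithinAt
    (hderiv a self_mem_Ici).continuousAt.continuousWithinAt
    (fun x hx => hderiv x (Ioi_subset_Ici_self hx)) hpos hlim

lemma lintegral_Ioi_inv_mul_eq_lintegral_exp (F : ℝ → ℝ≥0∞) :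
    ∫⁻ a in Ioi (0 : ℝ), ENNReal.ofReal a⁻¹ * F a = ∫⁻ s : ℝ, F (exp s) := by
  have h := lintegral_image_eq_lintegral_abs_deriv_mul (s := univ) MeasurableSet.univ
    (f := exp) (f' := exp) (fun x _ => (hasDerivAt_exp x).hasDerivWithinAt)
    exp_injective.injOn (fun a => ENNReal.ofReal a⁻¹ * F a)
  rw [image_univ, range_exp, Measure.restrict_univ] at h
  rw [h]
  refine lintegral_congr fun s => ?_
  rw [abs_of_pos (exp_pos s), ← mul_assoc, ← ENNReal.ofReal_mul (exp_pos s).le,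
    mul_inv_cancel₀ (exp_pos s).ne', ENNReal.ofReal_one, one_mul]

lemma lintegral_add_smul {E : Type*} [NormedAddCommGroup E] [NormedSpace ℝ E]
    [FiniteDimensional ℝ E] [MeasurableSpace E] [BorelSpace E] (μ : Measure E) [μ.IsAddHaarMeasure]
    {F : E → ℝ≥0∞} (hF : Measurable F) (c : E) {k : ℝ} (hk : 0 < k) :
    ∫⁻ p, F (c + k • p) ∂μ = ENNReal.ofReal (k ^ Module.finrank ℝ E)⁻¹ * ∫⁻ p, F p ∂μ := by
  have h := lintegral_map (μ := μ) (f := fun p => F (c + p)) (g := fun p => k • p)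
    (by fun_prop) (by fun_prop)
  rw [Measure.map_addHaar_smul μ hk.ne', lintegral_smul_measure, abs_of_pos (by positivity),
    lintegral_add_left_eq_self F c] at h
  exact h.symm

lemma lintegral_sq_add_sq {F : ℝ → ℝ≥0∞} (hF : Measurable F) :
    ∫⁻ p : ℝ × ℝ, F (p.1 ^ 2 + p.2 ^ 2) = ENNReal.ofReal π * ∫⁻ q in Ioi (0 : ℝ), F q := by
  have polar_sq : ∀ p : ℝ × ℝ,
      (polarCoord.symm p).1 ^ 2 + (polarCoord.symm p).2 ^ 2 = p.1 ^ 2 := fun p => by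
    simp only [polarCoord_symm_apply]
    linear_combination p.1 ^ 2 * sin_sq_add_cos_sq p.2
  have image_sq : (fun x : ℝ => x ^ 2) '' Ioi 0 = Ioi 0 := by
    ext y
    refine ⟨?_, fun hy => ⟨√y, sqrt_pos.2 hy, sq_sqrt (le_of_lt hy)⟩⟩
    rintro ⟨x, hx, rfl⟩
    exact pow_pos (mem_Ioi.1 hx) 2
  have subst_sq : ∫⁻ q in Ioi (0 : ℝ), F q
      = ∫⁻ x in Ioi (0 : ℝ), ENNReal.ofReal |2 * x| * F (x ^ 2) := by
    conv_lhs => rw [← image_sq]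
    exact lintegral_image_eq_lintegral_abs_deriv_mul measurableSet_Ioi
      (fun x _ => by simpa using (hasDerivAt_pow 2 x).hasDerivWithinAt)
      (fun x hx y hy hxy => (pow_left_inj₀ (le_of_lt hx) (le_of_lt hy) two_ne_zero).1 hxy) F
  rw [← lintegral_comp_polarCoord_symm, subst_sq, polarCoord_target, Measure.volume_eq_prod,
    ← Measure.prod_restrict]
  simp only [polar_sq]
  rw [lintegral_prod _ (by fun_prop), ← lintegral_const_mul _ (by fun_prop)]
  refine setLIntegral_congr_fun measurableSet_Ioi fun x hx => ?_
  have hx : 0 < x := hx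
  simp only [lintegral_const, Measure.restrict_apply_univ, Real.volume_Ioo, smul_eq_mul]
  rw [abs_of_pos (by positivity), mul_right_comm, ← ENNReal.ofReal_mul hx.le, ← mul_assoc,
    ← ENNReal.ofReal_mul pi_pos.le]
  ring_nf

lemma lintegral_inv_sq_add_sub_sq {m : ℝ} (hm : 0 < m) (c : ℝ) :
    ∫⁻ v : ℝ, ENNReal.ofReal (1 / (m ^ 2 + (v - c) ^ 2)) = ENNReal.ofReal (π / m) := by
  have unscaled : ∫⁻ v : ℝ, ENNReal.ofReal ((1 + v ^ 2)⁻¹) = ENNReal.ofReal π := by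
    rw [← ofReal_integral_eq_lintegral_ofReal integrable_inv_one_add_sq
      (Eventually.of_forall fun x => by positivity), integral_univ_inv_one_add_sq]
  have rescaled := lintegral_add_smul volume (F := fun v => ENNReal.ofReal ((1 + v ^ 2)⁻¹))
    (by fun_prop) (-(c / m)) (inv_pos.2 hm)
  have rescale_integrand : ∀ v : ℝ, ENNReal.ofReal (1 / (m ^ 2 + (v - c) ^ 2))
      = ENNReal.ofReal (m ^ 2)⁻¹ * ENNReal.ofReal ((1 + (-(c / m) + m⁻¹ • v) ^ 2)⁻¹) := by
    intro v
    rw [← ENNReal.ofReal_mul (by positivity), ← mul_inv, one_div, smul_eq_mul]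
    congr 2
    field_simp
    ring
  simp_rw [rescale_integrand]
  rw [lintegral_const_mul _ (by fun_prop), rescaled, unscaled, ← ENNReal.ofReal_mul (by positivity),
    ← ENNReal.ofReal_mul (by positivity)]
  congr 1
  rw [Module.finrank_self]
  field_simp

lemma lintegral_Iic_neg_div_sq {M c : ℝ} (hM : 0 < M) (hc : 0 ≤ c) :
    ∫⁻ v in Iic (-M), ENNReal.ofReal (c / v ^ 2) = ENNReal.ofReal (c / M) := by
  have reflected : ∫⁻ v in Iic (-M), ENNReal.ofReal (c / v ^ 2)
      = ∫⁻ v in Ioi M, ENNReal.ofReal (c / v ^ 2) := by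
    rw [restrict_Ioi_eq_restrict_Ici,
      ← (Measure.measurePreserving_neg (volume : Measure ℝ)).setLIntegral_comp_preimage_emb
        (MeasurableEquiv.neg ℝ).measurableEmbedding _ (Iic (-M))]
    simp
  rw [reflected, lintegral_Ioi_eq_of_hasDerivAt (g := fun x => -(c / x)) (l := 0)]
  · ring_nf
  · intro x hx
    have hx : x ≠ 0 := (hM.trans_le hx).ne'
    exact ((hasDerivAt_inv hx).const_mul c).neg.congr_deriv (by field_simp)
  · intro x _
    positivity
  · simpa [div_eq_mul_inv] using ((tendsto_inv_atTop_zero (𝕜 := ℝ)).const_mul c).neg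

lemma lintegral_Ici_mul_exp {k c : ℝ} (hk : 0 < k) (hc : 0 ≤ c) (M : ℝ) :
    ∫⁻ v in Ici M, ENNReal.ofReal (c * exp (-(k * v)))
      = ENNReal.ofReal (c / k * exp (-(k * M))) := by
  rw [← restrict_Ioi_eq_restrict_Ici,
    lintegral_Ioi_eq_of_hasDerivAt (g := fun x => -(c / k * exp (-(k * x)))) (l := 0)]
  · ring_nf
  · intro x _
    have h := ((hasDerivAt_id x).const_mul k).neg.exp.const_mul (c / k) |>.neg
    exact h.congr_deriv (by simp only [Pi.neg_apply, id_eq]; field_simp)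
  · intro x _
    positivity
  · have h : Tendsto (fun x : ℝ => -(k * x)) atTop atBot :=
      tendsto_neg_atTop_atBot.comp (tendsto_id.const_mul_atTop hk)
    simpa using ((tendsto_exp_atBot.comp h).const_mul (c / k)).neg

lemma lintegral_Ioi_inv_mul_log_sq {T : ℝ} (hT : 1 < T) :
    ∫⁻ q in Ioi T, ENNReal.ofReal (1 / (q * log q ^ 2)) = ENNReal.ofReal (1 / log T) := by
  rw [lintegral_Ioi_eq_of_hasDerivAt (g := fun x => -(log x)⁻¹) (l := 0)]
  · ring_nf
  · intro x hx
    have hx : 1 < x := hT.trans_le hx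
    have hlog : 0 < log x := log_pos hx
    exact ((hasDerivAt_log (by positivity : x ≠ 0)).inv hlog.ne').neg.congr_deriv (by field_simp)
  · intro x hx
    have hx : 1 < x := hT.trans hx
    positivity
  · simpa using (tendsto_inv_atTop_zero.comp tendsto_log_atTop).neg

lemma lintegral_Ioi_inv_sqrt_cube {T : ℝ} (hT : 0 < T) :
    ∫⁻ q in Ioi T, ENNReal.ofReal (1 / √q ^ 3) = ENNReal.ofReal (2 / √T) := by
  rw [lintegral_Ioi_eq_of_hasDerivAt (g := fun x => -(2 * (√x)⁻¹)) (l := 0)]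
  · ring_nf
  · intro x hx
    have hx : 0 < x := hT.trans_le hx
    have hs : √x ≠ 0 := by positivity
    exact (((hasDerivAt_sqrt hx.ne').inv hs).const_mul 2).neg.congr_deriv (by field_simp)
  · intro x _
    positivity
  · simpa using ((tendsto_inv_atTop_zero.comp tendsto_sqrt_atTop).const_mul 2).neg

lemma lintegral_Ioi_inv_add_sq {m : ℝ} (hm : 0 < m) :
    ∫⁻ q in Ioi (0 : ℝ), ENNReal.ofReal (1 / (m + q) ^ 2) = ENNReal.ofReal (1 / m) := by
  rw [lintegral_Ioi_eq_of_hasDerivAt (g := fun x => -(m + x)⁻¹) (l := 0)]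
  · simp
  · intro x hx
    have hx : 0 ≤ x := hx
    have h := ((hasDerivAt_id x).const_add m).inv (by simp only [id_eq]; positivity)
    exact h.neg.congr_deriv (by simp [neg_div])
  · intro x _
    positivity
  · have h : Tendsto (fun x : ℝ => m + x) atTop atTop :=
      tendsto_atTop_add_const_left _ _ tendsto_id
    simpa using (tendsto_inv_atTop_zero.comp h).neg

lemma tendsto_log_add_sub_log_add_atTop (a b : ℝ) :
    Tendsto (fun q => log (a + q) - log (b + q)) atTop (nhds 0) := by
  have add_atTop : ∀ c : ℝ, Tendsto (fun q : ℝ => c + q) atTop atTop := fun c =>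
    tendsto_atTop_add_const_left _ _ tendsto_id
  have ratio : Tendsto (fun q : ℝ => (a + q) / (b + q)) atTop (nhds 1) := by
    have h : Tendsto (fun q : ℝ => 1 + (a - b) / (b + q)) atTop (nhds (1 + 0)) :=
      (tendsto_const_nhds.div_atTop (add_atTop b)).const_add 1
    rw [add_zero] at h
    refine h.congr' ?_
    filter_upwards [(add_atTop b).eventually_gt_atTop 0] with q hq
    field_simp
    ring
  have h := ratio.log one_ne_zero
  rw [log_one] at h
  refine h.congr' ?_
  filter_upwards [(add_atTop a).eventually_gt_atTop 0, (add_atTop b).eventually_gt_atTop 0]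
    with q ha hb
  exact log_div ha.ne' hb.ne'

lemma lintegral_Ioi_inv_add_sub_inv_add {a b : ℝ} (ha : 0 < a) (hab : a ≤ b) :
    ∫⁻ q in Ioi (0 : ℝ), ENNReal.ofReal (1 / (a + q) - 1 / (b + q))
      = ENNReal.ofReal (log (b / a)) := by
  have hb : 0 < b := ha.trans_le hab
  have deriv_log_add : ∀ c > 0, ∀ x ∈ Ici (0 : ℝ),
      HasDerivAt (fun q => log (c + q)) (1 / (c + x)) x := fun c hc x hx => by
    have hx : 0 ≤ x := hx
    exact ((hasDerivAt_id x).const_add c).log (by simp only [id_eq]; positivity)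
  rw [lintegral_Ioi_eq_of_hasDerivAt
    (fun x hx => (deriv_log_add a ha x hx).sub (deriv_log_add b hb x hx)) ?_
    (tendsto_log_add_sub_log_add_atTop a b)]
  · rw [log_div hb.ne' ha.ne']
    simp
  · intro x hx
    have hx : 0 < x := hx
    exact sub_nonneg.2 (one_div_le_one_div_of_le (by positivity) (by linarith))

end Integrals

section HaarMeasure

/-- The global chart of the group in which the coordinate `a` is replaced by `log a`; it carries
Lebesgue measure to `ρG`. -/
def expChart (p : (ℝ × ℝ) × ℝ) : G := (p.1.1, p.1.2, exp p.2)

@[fun_prop] lemma measurable_expChart : Measurable expChart := by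
  unfold expChart
  fun_prop

lemma lintegral_rhoG {F : G → ℝ≥0∞} (hF : Measurable F) :
    ∫⁻ x, F x ∂ρG = ∫⁻ s : ℝ, ∫⁻ p : ℝ × ℝ, F (expChart (p, s)) := by
  have density : Measurable fun x : G => ENNReal.ofReal (if 0 < x.2.2 then x.2.2⁻¹ else 0) :=
    (Measurable.ite (measurableSet_lt (by fun_prop) (by fun_prop))
      (by fun_prop) (by fun_prop)).ennreal_ofReal
  have tonelli : ∀ g : G → ℝ≥0∞, Measurable g →
      ∫⁻ x, g x = ∫⁻ a : ℝ, ∫⁻ p : ℝ × ℝ, g (p.1, p.2, a) := fun g hg => by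
    rw [← (volume_preserving_prodAssoc (α₁ := ℝ) (β₁ := ℝ) (γ₁ := ℝ)).lintegral_comp hg,
      Measure.volume_eq_prod, lintegral_prod_symm _ (by fun_prop)]
    rfl
  rw [ρG, lintegral_withDensity_eq_lintegral_mul _ density hF, tonelli _ (density.mul hF)]
  unfold expChart
  rw [← lintegral_Ioi_inv_mul_eq_lintegral_exp (fun a => ∫⁻ p : ℝ × ℝ, F (p.1, p.2, a)),
    ← lintegral_indicator measurableSet_Ioi]
  refine lintegral_congr fun a => ?_
  by_cases ha : 0 < a
  · simp only [Pi.mul_apply, ha, if_true, indicator, mem_Ioi]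
    rw [lintegral_const_mul _ (by fun_prop)]
  · simp [ha]

lemma rhoG_eq_map : ρG = (volume : Measure ((ℝ × ℝ) × ℝ)).map expChart := by
  refine Measure.ext_of_lintegral _ fun F hF => ?_
  rw [lintegral_rhoG hF, lintegral_map hF (by fun_prop)]
  exact (lintegral_prod_symm (fun p => F (expChart p)) (by fun_prop)).symm

lemma ae_rhoG_pos : ∀ᵐ x ∂ρG, 0 < x.2.2 := by
  rw [rhoG_eq_map, ae_map_iff (by fun_prop) (measurableSet_lt (by fun_prop) (by fun_prop))]
  exact Eventually.of_forall fun p => exp_pos p.2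

lemma rhoG_Icc_prod_Icc_prod_Icc (c : G) {L r : ℝ} (hc : 0 < c.2.2) (hL : 0 ≤ L) :
    ρG (Icc (c.1 - L / 2) (c.1 + L / 2) ×ˢ (Icc (c.2.1 - L / 2) (c.2.1 + L / 2) ×ˢ
      Icc (c.2.2 * exp (-r)) (c.2.2 * exp r))) = ENNReal.ofReal (2 * r * L ^ 2) := by
  have preimage_box : expChart ⁻¹' (Icc (c.1 - L / 2) (c.1 + L / 2) ×ˢ
      (Icc (c.2.1 - L / 2) (c.2.1 + L / 2) ×ˢ Icc (c.2.2 * exp (-r)) (c.2.2 * exp r)))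
      = (Icc (c.1 - L / 2) (c.1 + L / 2) ×ˢ Icc (c.2.1 - L / 2) (c.2.1 + L / 2)) ×ˢ
        Icc (log c.2.2 + -r) (log c.2.2 + r) := by
    ext p
    conv_lhs => rw [← exp_log hc]
    simp only [expChart, mem_preimage, mem_prod, mem_Icc, ← exp_add, exp_le_exp, and_assoc]
  rw [rhoG_eq_map, Measure.map_apply (by fun_prop)
    (measurableSet_Icc.prod (measurableSet_Icc.prod measurableSet_Icc)), preimage_box]
  simp only [Measure.volume_eq_prod, Measure.prod_prod, Real.volume_Icc]
  rw [← ENNReal.ofReal_mul (by linarith), ← ENNReal.ofReal_mul (by nlinarith)]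
  ring_nf

@[fun_prop] lemma measurable_gMul (c : G) : Measurable (gMul c) := by
  unfold gMul
  fun_prop

@[fun_prop] lemma measurable_gMul_gInv (x : G) : Measurable fun y => gMul x (gInv y) := by
  unfold gMul gInv
  fun_prop

lemma lintegral_gMul {F : G → ℝ≥0∞} (hF : Measurable F) {c : G} (hc : 0 < c.2.2) :
    ∫⁻ x, F (gMul c x) ∂ρG = ENNReal.ofReal (deltaG c) * ∫⁻ x, F x ∂ρG := by
  have slice : ∀ s : ℝ, ∫⁻ p : ℝ × ℝ, F (gMul c (expChart (p, s)))
      = ENNReal.ofReal (deltaG c) * ∫⁻ p : ℝ × ℝ, F (expChart (p, log c.2.2 + s)) := fun s => by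
    have h := lintegral_add_smul volume (F := fun p : ℝ × ℝ => F (expChart (p, log c.2.2 + s)))
      (by fun_prop) (c.1, c.2.1) hc
    rw [Module.finrank_prod, Module.finrank_self] at h
    rw [deltaG, ← h]
    simp [gMul, expChart, exp_add, exp_log hc]
  have : Measurable fun s : ℝ => ∫⁻ p : ℝ × ℝ, F (expChart (p, s)) :=
    Measurable.lintegral_prod_left' (f := fun z : (ℝ × ℝ) × ℝ => F (expChart z)) (by fun_prop)
  rw [lintegral_rhoG (by fun_prop), lintegral_rhoG hF]
  simp only [slice]
  rw [lintegral_const_mul _ (by fun_prop),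
    lintegral_add_left_eq_self fun s : ℝ => ∫⁻ p : ℝ × ℝ, F (expChart (p, s))]

lemma lintegral_gMul_gInv {F : G → ℝ≥0∞} (hF : Measurable F) {x : G} (hx : 0 < x.2.2) :
    ∫⁻ y, F (gMul x (gInv y)) ∂ρG = ∫⁻ z, ENNReal.ofReal (deltaG z) * F z ∂ρG := by
  have slice : ∀ s : ℝ, ∫⁻ p : ℝ × ℝ, F (gMul x (gInv (expChart (p, s))))
      = ENNReal.ofReal (exp (log x.2.2 - s) ^ 2)⁻¹ *
          ∫⁻ p : ℝ × ℝ, F (expChart (p, log x.2.2 - s)) := fun s => by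
    have h := lintegral_add_smul volume
      (F := fun p : ℝ × ℝ => F (expChart (-p, log x.2.2 - s))) (by unfold expChart; fun_prop)
      (-(x.1, x.2.1)) (exp_pos (log x.2.2 - s))
    rw [lintegral_neg_eq_self (μ := (volume : Measure (ℝ × ℝ)))
      (fun p : ℝ × ℝ => F (expChart (p, log x.2.2 - s))), Module.finrank_prod,
      Module.finrank_self] at h
    rw [← h]
    refine lintegral_congr fun p => congrArg F ?_
    rw [exp_sub, exp_log hx]
    simp only [gMul, gInv, expChart, div_eq_mul_inv, neg_mul, one_mul, mul_neg, Prod.neg_mk,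
      neg_add_rev, neg_neg, Prod.fst_add, Prod.fst_neg, Prod.smul_fst, smul_eq_mul, Prod.snd_add,
      Prod.snd_neg, Prod.smul_snd, exp_sub, exp_log hx, Prod.mk.injEq, and_true]
    constructor <;> ring
  rw [lintegral_rhoG (by fun_prop), lintegral_rhoG (by unfold deltaG; fun_prop)]
  simp only [slice]
  rw [lintegral_sub_left_eq_self (fun s : ℝ => ENNReal.ofReal (exp s ^ 2)⁻¹ *
    ∫⁻ p : ℝ × ℝ, F (expChart (p, s)))]
  refine lintegral_congr fun s => ?_
  rw [← lintegral_const_mul _ (by fun_prop)]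
  rfl

lemma map_gMul {c : G} (hc : 0 < c.2.2) :
    ρG.map (gMul c) = ENNReal.ofReal (deltaG c) • ρG := by
  refine Measure.ext_of_lintegral _ fun F hF => ?_
  rw [lintegral_map hF (by fun_prop), lintegral_gMul hF hc, lintegral_smul_measure, smul_eq_mul]

lemma map_gMul_gInv {x : G} (hx : 0 < x.2.2) :
    ρG.map (fun y => gMul x (gInv y)) = ρG.withDensity fun z => ENNReal.ofReal (deltaG z) := by
  refine Measure.ext_of_lintegral _ fun F hF => ?_
  rw [lintegral_map hF (by fun_prop), lintegral_gMul_gInv hF hx,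
    lintegral_withDensity_eq_lintegral_mul _ (by unfold deltaG; fun_prop) hF]
  rfl

end HaarMeasure

section RadialCoordinates

/-- The coordinates `(|x|², log a)` of `x = (x₁, x₂, a)`. -/
def radial (x : G) : ℝ × ℝ := (x.1 ^ 2 + x.2.1 ^ 2, log x.2.2)

@[fun_prop] lemma measurable_radial : Measurable radial := by
  unfold radial
  fun_prop

lemma map_radial_rhoG :
    ρG.map radial = ENNReal.ofReal π • (volume.restrict (Ioi (0 : ℝ))).prod volume := by
  refine Measure.ext_of_lintegral _ fun F hF => ?_
  rw [lintegral_map hF (by fun_prop), lintegral_rhoG (by fun_prop), lintegral_smul_measure,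
    lintegral_prod_symm _ (by fun_prop), smul_eq_mul, ← lintegral_const_mul _ (by fun_prop)]
  refine lintegral_congr fun s => ?_
  simp only [radial, expChart, log_exp]
  exact lintegral_sq_add_sq (F := fun q => F (q, s)) (by fun_prop)

lemma IsMajorized.of_radial {Φ : G → ℝ≥0∞} {F : ℝ × ℝ → ℝ≥0∞} {U : Set (ℝ × ℝ)} {C : ℝ≥0∞}
    (hU : MeasurableSet U) (hF : Measurable F)
    (hΦ : ∀ x : G, 0 < x.2.2 → radial x ∈ U → Φ x ≤ F (radial x))
    (hC : ∫⁻ p in U, F p ∂(volume.restrict (Ioi (0 : ℝ))).prod volume ≤ C) :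
    IsMajorized Φ (ρG.restrict (radial ⁻¹' U)) (ENNReal.ofReal π * C) := by
  refine ⟨fun x => F (radial x), by fun_prop, ?_, ?_⟩
  · rw [EventuallyLE, ae_restrict_iff' (measurable_radial hU)]
    filter_upwards [ae_rhoG_pos] with x hx
    exact hΦ x hx
  · rw [← setLIntegral_map hU hF measurable_radial, map_radial_rhoG, Measure.restrict_smul,
      lintegral_smul_measure, smul_eq_mul]
    gcongr

lemma setLIntegral_Iic_prod {g : ℝ → ℝ≥0∞} (hg : Measurable g) (T : ℝ) (S : Set ℝ) :
    ∫⁻ p in Iic T ×ˢ S, g p.2 ∂(volume.restrict (Ioi (0 : ℝ))).prod volume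
      = ENNReal.ofReal T * ∫⁻ v in S, g v := by
  rw [← Measure.prod_restrict, lintegral_prod_symm _ (by fun_prop),
    Measure.restrict_restrict measurableSet_Iic, inter_comm, Ioi_inter_Iic]
  simp only [lintegral_const, Measure.restrict_apply_univ, Real.volume_Ioc, sub_zero]
  rw [lintegral_mul_const _ hg, mul_comm]

end RadialCoordinates

section GroupLaw

lemma gMul_assoc (x y z : G) : gMul (gMul x y) z = gMul x (gMul y z) := by
  simp only [gMul, Prod.mk.injEq]
  refine ⟨?_, ?_, ?_⟩ <;> ring

lemma gMul_gMul_gInv {c : G} (hc : 0 < c.2.2) (x : G) : gMul c (gMul (gInv c) x) = x := by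
  refine Prod.ext ?_ (Prod.ext ?_ ?_) <;> simp only [gMul, gInv] <;> field_simp <;> ring

lemma gMul_gInv_gMul_gInv {x y : G} (hx : 0 < x.2.2) (hy : 0 < y.2.2) :
    gMul (gInv (gMul x (gInv y))) x = y := by
  refine Prod.ext ?_ (Prod.ext ?_ ?_) <;> simp only [gMul, gInv] <;> field_simp <;> ring

lemma deltaG_mul_deltaG_gInv {c : G} (hc : 0 < c.2.2) : deltaG c * deltaG (gInv c) = 1 := by
  simp only [deltaG, gInv]
  field_simp

end GroupLaw

section IntegralKernel

/-- The normalizing constant of the heat kernel. -/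
def heatConst : ℝ := (8 * π ^ ((3 : ℝ) / 2))⁻¹

/-- The heat kernel divided by `heatConst · δ^{1/2}`, as a function of the distance `s`. -/
def heatProfile (t s : ℝ) : ℝ :=
  (if s = 0 then 1 else s / sinh s) * t ^ (-(3 : ℝ) / 2) * exp (-(s ^ 2) / (4 * t))

/-- The squared Euclidean distance `q` between the `ℝ²`-components of two group elements. -/
def horizDistSq (x y : G) : ℝ := (x.1 - y.1) ^ 2 + (x.2.1 - y.2.1) ^ 2

/-- `cosh d(x, y)`, where `x` and `y` have last coordinates `a` and `b` and horizontal squared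
distance `q`. -/
def coshDist (a b q : ℝ) : ℝ := (a ^ 2 + b ^ 2 + q) / (2 * a * b)

/-- The distance between elements of `G` with last coordinates `a` and `b` and horizontal squared
distance `q`. -/
def hypDist (a b q : ℝ) : ℝ := arcosh (coshDist a b q)

/-- The integral kernel `δ(x) p_t(x⁻¹y)` with respect to `ρ` of the convolution with `p_t`, in terms
of the last coordinates `a` of `x`, `b` of `y` and of the horizontal squared distance `q`. -/
def heatKer (t a b q : ℝ) : ℝ := heatConst * (a * b)⁻¹ * heatProfile t (hypDist a b q)

lemma heatConst_pos : 0 < heatConst := by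
  unfold heatConst
  positivity

lemma horizDistSq_nonneg (x y : G) : 0 ≤ horizDistSq x y := by
  unfold horizDistSq
  positivity

lemma one_le_coshDist {a b q : ℝ} (ha : 0 < a) (hb : 0 < b) (hq : 0 ≤ q) :
    1 ≤ coshDist a b q := by
  unfold coshDist
  rw [le_div_iff₀ (by positivity)]
  nlinarith [sq_nonneg (a - b)]

lemma hypDist_nonneg {a b q : ℝ} (ha : 0 < a) (hb : 0 < b) (hq : 0 ≤ q) : 0 ≤ hypDist a b q :=
  arcosh_nonneg (one_le_coshDist ha hb hq)

lemma cosh_hypDist {a b q : ℝ} (ha : 0 < a) (hb : 0 < b) (hq : 0 ≤ q) :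
    cosh (hypDist a b q) = coshDist a b q :=
  cosh_arcosh (one_le_coshDist ha hb hq)

lemma heatProfile_nonneg {t s : ℝ} (ht : 0 ≤ t) (hs : 0 ≤ s) : 0 ≤ heatProfile t s := by
  unfold heatProfile
  have : 0 ≤ if s = 0 then 1 else s / sinh s := by
    split_ifs
    · exact zero_le_one
    · exact div_nonneg hs (sinh_nonneg_iff.2 hs)
  positivity

lemma heatProfile_le {t s : ℝ} (ht : 0 ≤ t) (hs : 0 ≤ s) :
    heatProfile t s ≤ t ^ (-(3 : ℝ) / 2) * exp (-(s ^ 2) / (4 * t)) := by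
  unfold heatProfile
  have : (if s = 0 then 1 else s / sinh s) ≤ 1 := by
    split_ifs with h
    · exact le_rfl
    · exact div_le_one_of_le₀ (self_le_sinh_iff.2 hs) (sinh_nonneg_iff.2 hs)
  rw [mul_assoc]
  exact mul_le_of_le_one_left (by positivity) this

lemma heatKer_nonneg {t a b q : ℝ} (ht : 0 ≤ t) (ha : 0 < a) (hb : 0 < b) (hq : 0 ≤ q) :
    0 ≤ heatKer t a b q := by
  have := heatConst_pos
  have := heatProfile_nonneg ht (hypDist_nonneg ha hb hq)
  unfold heatKer
  positivity

lemma measurable_heatProfile (t : ℝ) : Measurable (heatProfile t) := by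
  unfold heatProfile
  refine (Measurable.mul ?_ (by fun_prop)).mul (by fun_prop)
  exact Measurable.ite (measurableSet_singleton 0) (by fun_prop)
    (measurable_id.div continuous_sinh.measurable)

lemma measurable_heatK (t : ℝ) : Measurable (heatK t) := by
  have : heatK t = fun x => heatConst * √(deltaG x) * heatProfile t (rG x) := by
    unfold heatK heatConst heatProfile
    ext x
    ring
  rw [this]
  refine Measurable.mul ?_ ((measurable_heatProfile t).comp ?_)
  · unfold deltaG
    fun_prop
  · unfold rG coshArg
    fun_prop

lemma measurable_heatKer (t : ℝ) : Measurable fun p : ℝ × ℝ × ℝ => heatKer t p.1 p.2.1 p.2.2 := by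
  unfold heatKer hypDist arcosh coshDist
  exact Measurable.mul (by fun_prop) ((measurable_heatProfile t).comp (by fun_prop))

lemma measurable_heatKer_right (t : ℝ) (x : G) :
    Measurable fun y : G => heatKer t x.2.2 y.2.2 (horizDistSq x y) := by
  refine (measurable_heatKer t).comp (f := fun y : G => (x.2.2, y.2.2, horizDistSq x y)) ?_
  unfold horizDistSq
  fun_prop

lemma coshArg_gInv_gMul {x y : G} (hx : 0 < x.2.2) (hy : 0 < y.2.2) :
    coshArg (gMul (gInv y) x) = coshDist x.2.2 y.2.2 (horizDistSq x y) := by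
  simp only [coshArg, gMul, gInv, coshDist, horizDistSq]
  field_simp
  ring

lemma deltaG_mul_heatK_gInv_gMul (t : ℝ) {x y : G} (hx : 0 < x.2.2) (hy : 0 < y.2.2) :
    deltaG y * heatK t (gMul (gInv y) x) = heatKer t x.2.2 y.2.2 (horizDistSq x y) := by
  have sqrt_delta : √(deltaG (gMul (gInv y) x)) = y.2.2 / x.2.2 := by
    have : deltaG (gMul (gInv y) x) = (y.2.2 / x.2.2) ^ 2 := by
      simp only [deltaG, gMul, gInv]
      field_simp
    rw [this, sqrt_sq (by positivity)]
  have dist : rG (gMul (gInv y) x) = hypDist x.2.2 y.2.2 (horizDistSq x y) := by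
    rw [rG, coshArg_gInv_gMul hx hy, hypDist, arcosh]
  rw [heatK, sqrt_delta, dist, heatKer, heatConst, heatProfile, deltaG]
  field_simp

lemma convHeat_eq_integral_heatKer {f : G → ℝ} (hf : AEStronglyMeasurable f ρG) (t : ℝ) {x : G}
    (hx : 0 < x.2.2) :
    convHeat f t x = ∫ y, f y * heatKer t x.2.2 y.2.2 (horizDistSq x y) ∂ρG := by
  set g : G → ℝ := fun z => f z * heatK t (gMul (gInv z) x) with hg
  have conv_eq : convHeat f t x = ∫ y, g (gMul x (gInv y)) ∂ρG := by
    refine integral_congr_ae ?_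
    filter_upwards [ae_rhoG_pos] with y hy
    simp only [hg, gMul_gInv_gMul_gInv hx hy]
  have measurable_g : AEStronglyMeasurable g (ρG.map fun y => gMul x (gInv y)) := by
    rw [map_gMul_gInv hx]
    refine (hf.mono_ac (withDensity_absolutelyContinuous _ _)).mul
      ((measurable_heatK t).comp ?_).aestronglyMeasurable
    unfold gMul gInv
    fun_prop
  rw [conv_eq, ← integral_map (measurable_gMul_gInv x).aemeasurable measurable_g,
    map_gMul_gInv hx, integral_withDensity_eq_integral_toReal_smul (by unfold deltaG; fun_prop)
    (by simp)]
  refine integral_congr_ae ?_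
  filter_upwards [ae_rhoG_pos] with y hy
  rw [ENNReal.toReal_ofReal (by unfold deltaG; positivity),
    ← deltaG_mul_heatK_gInv_gMul t hx hy, smul_eq_mul]
  ring

lemma convHeat_comp_gMul (f : G → ℝ) (t : ℝ) {c : G} (hc : 0 < c.2.2) (x : G) :
    convHeat (fun y => f (gMul c y)) t (gMul (gInv c) x) = convHeat f t x := by
  simp only [convHeat, ← gMul_assoc, gMul_gMul_gInv hc]

lemma convHeat_const_mul (f : G → ℝ) (t k : ℝ) (x : G) :
    convHeat (fun y => k * f y) t x = k * convHeat f t x := by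
  simp only [convHeat, mul_assoc, integral_const_mul]

lemma inv_le_inv_mul_exp_hypDist {a b q : ℝ} (ha : 0 < a) (hb : 0 < b) (hq : 0 ≤ q) :
    b⁻¹ ≤ a⁻¹ * (2 * exp (hypDist a b q)) := by
  have cosh_le_exp : cosh (hypDist a b q) ≤ exp (hypDist a b q) := by
    rw [cosh_eq]
    linarith [exp_le_exp.2 (neg_le_self (hypDist_nonneg ha hb hq))]
  have le_coshDist : a / (2 * b) ≤ coshDist a b q := by
    unfold coshDist
    rw [div_le_div_iff₀ (by positivity) (by positivity)]
    nlinarith [mul_pos ha hb, mul_nonneg hb.le hq, mul_pos hb (pow_pos hb 2)]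
  rw [cosh_hypDist ha hb hq] at cosh_le_exp
  calc b⁻¹ = a⁻¹ * (2 * (a / (2 * b))) := by field_simp
    _ ≤ a⁻¹ * (2 * exp (hypDist a b q)) := by
        gcongr
        exact le_coshDist.trans cosh_le_exp

lemma exp_mul_exp_neg_sq_div_le {t : ℝ} (ht : 0 < t) (s : ℝ) :
    exp s * exp (-(s ^ 2) / (4 * t)) ≤ exp t := by
  rw [← exp_add, exp_le_exp]
  have complete_square : t - (s + -(s ^ 2) / (4 * t)) = (s - 2 * t) ^ 2 / (4 * t) := by
    field_simp
    ring
  rw [← sub_nonneg, complete_square]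
  positivity

/-- A bound for `heatKer t a b q` uniform in `b` and `q`. -/
def heatKerBound (t a : ℝ) : ℝ := heatConst * (a ^ 2)⁻¹ * 2 * t ^ (-(3 : ℝ) / 2) * exp t

lemma heatKer_le_heatKerBound {t a b q : ℝ} (ht : 0 < t) (ha : 0 < a) (hb : 0 < b) (hq : 0 ≤ q) :
    heatKer t a b q ≤ heatKerBound t a := by
  have hs := hypDist_nonneg ha hb hq
  have hinv := inv_le_inv_mul_exp_hypDist ha hb hq
  have hc := heatConst_pos
  unfold heatKer heatKerBound
  set s := hypDist a b q
  calc heatConst * (a * b)⁻¹ * heatProfile t s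
      ≤ heatConst * (a⁻¹ * (a⁻¹ * (2 * exp s)))
          * (t ^ (-(3 : ℝ) / 2) * exp (-(s ^ 2) / (4 * t))) := by
        rw [mul_inv]
        gcongr
        · exact heatProfile_nonneg ht.le hs
        · exact heatProfile_le ht.le hs
    _ = heatConst * (a ^ 2)⁻¹ * 2 * t ^ (-(3 : ℝ) / 2)
          * (exp s * exp (-(s ^ 2) / (4 * t))) := by ring
    _ ≤ heatConst * (a ^ 2)⁻¹ * 2 * t ^ (-(3 : ℝ) / 2) * exp t := by
        gcongr
        exact exp_mul_exp_neg_sq_div_le ht s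

lemma ae_norm_heatKer_le {t : ℝ} (ht : 0 < t) {x : G} (hx : 0 < x.2.2) :
    ∀ᵐ y ∂ρG, ‖heatKer t x.2.2 y.2.2 (horizDistSq x y)‖ ≤ heatKerBound t x.2.2 := by
  filter_upwards [ae_rhoG_pos] with y hy
  rw [norm_of_nonneg (heatKer_nonneg ht.le hx hy (horizDistSq_nonneg x y))]
  exact heatKer_le_heatKerBound ht hx hy (horizDistSq_nonneg x y)

lemma integrable_mul_heatKer {f : G → ℝ} (hf : Integrable f ρG) {t : ℝ} (ht : 0 < t) {x : G}
    (hx : 0 < x.2.2) :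
    Integrable (fun y => f y * heatKer t x.2.2 y.2.2 (horizDistSq x y)) ρG :=
  hf.mul_bdd (measurable_heatKer_right t x).aestronglyMeasurable (ae_norm_heatKer_le ht hx)

lemma convHeat_add {f g : G → ℝ} (hf : Integrable f ρG) (hg : Integrable g ρG) {t : ℝ}
    (ht : 0 < t) {x : G} (hx : 0 < x.2.2) :
    convHeat (f + g) t x = convHeat f t x + convHeat g t x := by
  rw [convHeat_eq_integral_heatKer (hf.add hg).1 t hx, convHeat_eq_integral_heatKer hf.1 t hx,
    convHeat_eq_integral_heatKer hg.1 t hx,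
    ← integral_add (integrable_mul_heatKer hf ht hx) (integrable_mul_heatKer hg ht hx)]
  simp only [Pi.add_apply, add_mul]

lemma convHeat_finsetSum {ι : Type*} (s : Finset ι) {f : ι → G → ℝ}
    (hf : ∀ i ∈ s, Integrable (f i) ρG) {t : ℝ} (ht : 0 < t) {x : G} (hx : 0 < x.2.2) :
    convHeat (∑ i ∈ s, f i) t x = ∑ i ∈ s, convHeat (f i) t x := by
  classical
  induction s using Finset.induction_on with
  | empty => simp [convHeat]
  | insert i s hi ih =>
    have hs : ∀ j ∈ s, Integrable (f j) ρG := fun j hj => hf j (Finset.mem_insert_of_mem hj)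
    rw [Finset.sum_insert hi, Finset.sum_insert hi,
      convHeat_add (hf i (Finset.mem_insert_self i s)) (integrable_finsetSum' s hs) ht hx, ih hs]

lemma ofReal_abs_convHeat_le_eLpNorm_one {f : G → ℝ} (hf : Integrable f ρG) {t : ℝ} (ht : 0 < t)
    {x : G} (hx : 0 < x.2.2) :
    ENNReal.ofReal |convHeat f t x| ≤ ENNReal.ofReal (heatKerBound t x.2.2) * eLpNorm f 1 ρG := by
  rw [convHeat_eq_integral_heatKer hf.1 t hx, ← norm_eq_abs, ofReal_norm,
    eLpNorm_one_eq_lintegral_enorm, ← lintegral_const_mul' _ _ ENNReal.ofReal_ne_top]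
  refine (enorm_integral_le_lintegral_enorm _).trans (lintegral_mono_ae ?_)
  filter_upwards [ae_norm_heatKer_le ht hx] with y hy
  rw [enorm_mul, mul_comm, ← ofReal_norm (heatKer _ _ _ _)]
  gcongr

end IntegralKernel

section AtomicReduction

lemma ofReal_abs_convHeat_le_maxHeat (f : G → ℝ) {t : ℝ} (ht : 0 < t) (x : G) :
    ENNReal.ofReal |convHeat f t x| ≤ maxHeat f x :=
  le_iSup₂_of_le t ht le_rfl

lemma maxHeat_const_mul (k : ℝ) (f : G → ℝ) (x : G) :
    maxHeat (fun y => k * f y) x = ENNReal.ofReal |k| * maxHeat f x := by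
  simp only [maxHeat, convHeat_const_mul, abs_mul, ENNReal.ofReal_mul (abs_nonneg k),
    ENNReal.mul_iSup]

lemma maxHeat_comp_gMul (f : G → ℝ) {c : G} (hc : 0 < c.2.2) (x : G) :
    maxHeat (fun y => f (gMul c y)) (gMul (gInv c) x) = maxHeat f x := by
  simp only [maxHeat, convHeat_comp_gMul f _ hc]

lemma IsH1Decomp.maxHeat_le_tsum {f : G → ℝ} {lam : ℕ → ℝ} {A : ℕ → G → ℝ}
    (h : IsH1Decomp f lam A) (hf : Integrable f ρG) {x : G} (hx : 0 < x.2.2) :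
    maxHeat f x ≤ ∑' j, ENNReal.ofReal |lam j| * maxHeat (A j) x := by
  obtain ⟨hA, -, hlim⟩ := h
  refine iSup₂_le fun t ht => ?_
  have term_integrable : ∀ j, Integrable (fun y => lam j * A j y) ρG :=
    fun j => (hA j).1.const_mul _
  set S : ℕ → G → ℝ := fun N => ∑ j ∈ Finset.range N, fun y => lam j * A j y with hS
  have S_integrable : ∀ N, Integrable (S N) ρG :=
    fun N => integrable_finsetSum' _ fun j _ => term_integrable j
  have partial_bound : ∀ N, ENNReal.ofReal |convHeat (S N) t x|
      ≤ ∑' j, ENNReal.ofReal |lam j| * maxHeat (A j) x := fun N => by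
    rw [convHeat_finsetSum _ (fun j _ => term_integrable j) ht hx]
    calc ENNReal.ofReal |∑ j ∈ Finset.range N, convHeat (fun y => lam j * A j y) t x|
        ≤ ENNReal.ofReal (∑ j ∈ Finset.range N, |convHeat (fun y => lam j * A j y) t x|) :=
          ENNReal.ofReal_le_ofReal (Finset.abs_sum_le_sum_abs _ _)
      _ = ∑ j ∈ Finset.range N, ENNReal.ofReal |convHeat (fun y => lam j * A j y) t x| :=
          ENNReal.ofReal_sum_of_nonneg fun _ _ => abs_nonneg _
      _ ≤ ∑ j ∈ Finset.range N, ENNReal.ofReal |lam j| * maxHeat (A j) x := by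
          refine Finset.sum_le_sum fun j _ => ?_
          rw [← maxHeat_const_mul]
          exact ofReal_abs_convHeat_le_maxHeat _ ht x
      _ ≤ ∑' j, ENNReal.ofReal |lam j| * maxHeat (A j) x := ENNReal.sum_le_tsum _
  have limit : Tendsto (fun N => ∑' j, ENNReal.ofReal |lam j| * maxHeat (A j) x
      + ENNReal.ofReal (heatKerBound t x.2.2) * eLpNorm (f - S N) 1 ρG) atTop
      (nhds (∑' j, ENNReal.ofReal |lam j| * maxHeat (A j) x)) := by
    have remainder : ∀ N, f - S N = fun y => f y - ∑ j ∈ Finset.range N, lam j * A j y :=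
      fun N => by
        ext y
        simp [hS]
    simp only [remainder]
    simpa using (ENNReal.Tendsto.const_mul hlim (Or.inr ENNReal.ofReal_ne_top)).const_add _
  refine ge_of_tendsto' limit fun N => ?_
  have split : convHeat f t x = convHeat (S N) t x + convHeat (f - S N) t x := by
    rw [← convHeat_add (S_integrable N) (hf.sub (S_integrable N)) ht hx, add_sub_cancel]
  rw [split]
  refine (ENNReal.ofReal_le_ofReal (abs_add_le _ _)).trans ?_
  rw [ENNReal.ofReal_add (abs_nonneg _) (abs_nonneg _)]
  exact add_le_add (partial_bound N)
    (ofReal_abs_convHeat_le_eLpNorm_one (hf.sub (S_integrable N)) ht hx)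

lemma lintegral_maxHeat_le_mul_H1norm {C : ℝ} (hC : 0 < C)
    (hatoms : ∀ A, IsAtomG A → IsMajorized (maxHeat A) ρG (ENNReal.ofReal C))
    {f : G → ℝ} (hf : MemH1 f) :
    ∫⁻ x, maxHeat f x ∂ρG ≤ ENNReal.ofReal (C * H1norm f) := by
  obtain ⟨hfi, lam₀, A₀, h₀⟩ := hf
  have le_sum : ∀ lam A, IsH1Decomp f lam A →
      ∫⁻ x, maxHeat f x ∂ρG ≤ ENNReal.ofReal (C * ∑' j, |lam j|) := fun lam A h => by
    have hmaj := IsMajorized.tsum fun j => (hatoms (A j) (h.1 j)).const_mul (ENNReal.ofReal |lam j|)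
    refine (hmaj.mono ?_ le_rfl).lintegral_le.trans_eq ?_
    · filter_upwards [ae_rhoG_pos] with x hx
      exact h.maxHeat_le_tsum hfi hx
    · rw [ENNReal.tsum_mul_right, mul_comm C,
        ENNReal.ofReal_mul (tsum_nonneg fun _ => abs_nonneg _),
        ENNReal.ofReal_tsum_of_nonneg (fun _ => abs_nonneg _) h.2.1]
  have hfin : ∫⁻ x, maxHeat f x ∂ρG ≠ ∞ :=
    ne_top_of_le_ne_top ENNReal.ofReal_ne_top (le_sum _ _ h₀)
  have div_le : (∫⁻ x, maxHeat f x ∂ρG).toReal / C ≤ H1norm f := by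
    refine le_csInf ⟨_, lam₀, A₀, h₀, rfl⟩ ?_
    rintro s ⟨lam, A, h, rfl⟩
    rw [div_le_iff₀' hC]
    exact ENNReal.toReal_le_of_le_ofReal (mul_nonneg hC.le (tsum_nonneg fun _ => abs_nonneg _))
      (le_sum lam A h)
  rw [← ENNReal.ofReal_toReal hfin]
  exact ENNReal.ofReal_le_ofReal ((div_le_iff₀' hC).1 div_le)

/-- The left translate of `f` that moves `c` to the identity, normalized in `L¹(ρ)`. -/
def leftTranslate (c : G) (f : G → ℝ) (y : G) : ℝ := deltaG (gInv c) * f (gMul c y)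

lemma IsMajorized.of_leftTranslate {f : G → ℝ} {c : G} (hc : 0 < c.2.2) {C : ℝ≥0∞}
    (h : IsMajorized (maxHeat (leftTranslate c f)) ρG C) : IsMajorized (maxHeat f) ρG C := by
  have hc' : 0 < (gInv c).2.2 := by
    simp only [gInv]
    positivity
  have delta_nonneg : ∀ x, 0 ≤ deltaG x := fun x => by
    unfold deltaG
    positivity
  have hmax : maxHeat f
      = fun x => ENNReal.ofReal (deltaG c) * maxHeat (leftTranslate c f) (gMul (gInv c) x) := by
    ext x
    unfold leftTranslate
    rw [maxHeat_const_mul, abs_of_nonneg (delta_nonneg _), ← mul_assoc,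
      ← ENNReal.ofReal_mul (delta_nonneg _), deltaG_mul_deltaG_gInv hc, ENNReal.ofReal_one, one_mul,
      maxHeat_comp_gMul f hc]
  rw [hmax, ← one_mul C, ← ENNReal.ofReal_one, ← deltaG_mul_deltaG_gInv hc,
    ENNReal.ofReal_mul (delta_nonneg _), mul_assoc]
  have hmap := h.smul_measure (ENNReal.ofReal (deltaG (gInv c)))
  rw [← map_gMul hc'] at hmap
  exact (hmap.comp_of_map (measurable_gMul (gInv c))).const_mul _

/-- The box of horizontal side `L` and vertical extent `r` centred at the identity. -/
def centredBox (L r : ℝ) : Set G :=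
  {y | |y.1| ≤ L / 2 ∧ |y.2.1| ≤ L / 2 ∧ exp (-r) ≤ y.2.2 ∧ y.2.2 ≤ exp r}

/-- The relation between `L` and `r` for which `centredBox L r` is a Calderón–Zygmund set (up to the
inequalities being strict). -/
def IsCZScale (L r : ℝ) : Prop :=
  (r < 1 → exp 2 * r ≤ L ∧ L ≤ exp 8 * r) ∧ (1 ≤ r → exp (2 * r) ≤ L ∧ L ≤ exp (8 * r))

/-- Atoms supported in a box centred at the identity; `2rL²` is the measure of the box. -/
structure IsCentredAtom (A : G → ℝ) (L r : ℝ) : Prop where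
  integrable : Integrable A ρG
  support : ∀ y ∉ centredBox L r, A y = 0
  ae_abs_le : ∀ᵐ y ∂ρG, |A y| ≤ (2 * r * L ^ 2)⁻¹
  integral_eq_zero : ∫ y, A y ∂ρG = 0

lemma abs_div_le_of_add_mul_mem_Icc {c α y l : ℝ} (hα : 0 < α)
    (h : c + α * y ∈ Icc (c - l / 2) (c + l / 2)) : |y| ≤ l / α / 2 := by
  obtain ⟨h₁, h₂⟩ := h
  rw [div_right_comm, abs_le, neg_le, le_div_iff₀ hα, le_div_iff₀ hα]
  constructor <;> linarith

lemma isCentredAtom_leftTranslate {A : G → ℝ} {c : G} {L r : ℝ} (hc : 0 < c.2.2) (hL : 0 < L)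
    (hr : 0 < r) (hA : Integrable A ρG)
    (hsupp : ∀ x ∉ Icc (c.1 - L / 2) (c.1 + L / 2) ×ˢ (Icc (c.2.1 - L / 2) (c.2.1 + L / 2) ×ˢ
      Icc (c.2.2 * exp (-r)) (c.2.2 * exp r)), A x = 0)
    (hbdd : eLpNorm A ⊤ ρG ≤ (ENNReal.ofReal (2 * r * L ^ 2))⁻¹) (hmean : ∫ x, A x ∂ρG = 0) :
    IsCentredAtom (leftTranslate c A) (L / c.2.2) r := by
  have map_ac : ρG.map (gMul c) ≪ ρG := by
    rw [map_gMul hc]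
    exact Measure.smul_absolutelyContinuous
  have delta_inv : deltaG (gInv c) = c.2.2 ^ 2 := by
    simp only [deltaG, gInv]
    field_simp
  refine ⟨Integrable.const_mul ?_ _, fun y hy => ?_, ?_, ?_⟩
  · refine (integrable_map_measure (hA.1.mono_ac map_ac) (measurable_gMul c).aemeasurable).1 ?_
    rw [map_gMul hc]
    exact hA.smul_measure ENNReal.ofReal_ne_top
  · rw [leftTranslate, hsupp, mul_zero]
    rintro ⟨h₁, h₂, h₃, h₄⟩
    exact hy ⟨abs_div_le_of_add_mul_mem_Icc hc h₁, abs_div_le_of_add_mul_mem_Icc hc h₂,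
      le_of_mul_le_mul_left h₃ hc, le_of_mul_le_mul_left h₄ hc⟩
  · have hA_le : ∀ᵐ y ∂ρG, |A y| ≤ (2 * r * L ^ 2)⁻¹ := by
      rw [← ENNReal.ofReal_inv_of_pos (by positivity), eLpNorm_exponent_top] at hbdd
      filter_upwards [ae_le_eLpNormEssSup (f := A) (μ := ρG)] with y hy
      have := hy.trans hbdd
      rwa [← ofReal_norm, ENNReal.ofReal_le_ofReal_iff (by positivity)] at this
    filter_upwards [ae_of_ae_map (measurable_gMul c).aemeasurable (map_ac.ae_le hA_le)] with y hy
    rw [leftTranslate, delta_inv, abs_mul, abs_of_pos (by positivity)]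
    calc c.2.2 ^ 2 * |A (gMul c y)| ≤ c.2.2 ^ 2 * (2 * r * L ^ 2)⁻¹ := by gcongr
      _ = (2 * r * (L / c.2.2) ^ 2)⁻¹ := by field_simp
  · unfold leftTranslate
    rw [integral_const_mul, ← integral_map (measurable_gMul c).aemeasurable
      (hA.1.mono_ac map_ac), map_gMul hc, integral_smul_measure, hmean, smul_zero, mul_zero]

lemma IsAtomG.exists_isCentredAtom {A : G → ℝ} (h : IsAtomG A) :
    ∃ (c : G) (L r : ℝ), 0 < c.2.2 ∧ 0 < L ∧ 0 < r ∧ IsCZScale L r ∧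
      IsCentredAtom (leftTranslate c A) L r := by
  obtain ⟨hA, R, ⟨c, L, r, hc, hL, hr, rfl, hsmall, hbig⟩, hsupp, hbdd, hmean⟩ := h
  rw [rhoG_Icc_prod_Icc_prod_Icc c hc hL.le] at hbdd
  refine ⟨c, L / c.2.2, r, hc, by positivity, hr, ⟨fun h => ?_, fun h => ?_⟩,
    isCentredAtom_leftTranslate hc hL hr hA hsupp hbdd hmean⟩
  · rw [le_div_iff₀ hc, div_le_iff₀ hc]
    constructor <;> linarith [hsmall h]
  · rw [le_div_iff₀ hc, div_le_iff₀ hc]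
    constructor <;> linarith [hbig h]

lemma IsAtomG.isMajorized_maxHeat {C : ℝ≥0∞}
    (hcentred : ∀ A L r, 0 < L → 0 < r → IsCZScale L r → IsCentredAtom A L r →
      IsMajorized (maxHeat A) ρG C) {A : G → ℝ} (hA : IsAtomG A) :
    IsMajorized (maxHeat A) ρG C := by
  obtain ⟨c, L, r, hc, hL, hr, hLr, hcA⟩ := hA.exists_isCentredAtom
  exact (hcentred _ L r hL hr hLr hcA).of_leftTranslate hc

end AtomicReduction

section DecayProfile

/-- The heat kernel with the factor `sinh s` of its denominator removed, as a function of the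
distance `s`. Its bounds `O(s⁻²)` and, for the derivative, `O(s⁻³)` are uniform in `t`. -/
def decayProfile (t s : ℝ) : ℝ := s * t ^ (-(3 : ℝ) / 2) * exp (-(s ^ 2) / (4 * t))

lemma rpow_neg_three_half {t : ℝ} (ht : 0 < t) : t ^ (-(3 : ℝ) / 2) = (√t ^ 3)⁻¹ := by
  rw [show (-(3 : ℝ) / 2) = -(3 / 2) by ring, rpow_neg ht.le, sqrt_eq_rpow,
    ← rpow_natCast, ← rpow_mul ht.le]
  norm_num

lemma neg_sq_div_four_mul {t : ℝ} (ht : 0 < t) (s : ℝ) :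
    -(s ^ 2) / (4 * t) = -((s / √t) ^ 2 / 4) := by
  rw [div_pow, sq_sqrt ht.le]
  field_simp

lemma pow_mul_exp_neg_sq_le (z : ℝ) :
    z ^ 3 * (1 + z ^ 2 / 2) * exp (-(z ^ 2 / 4)) ≤ 244 := by
  obtain ⟨y, hy⟩ : ∃ y, y = z ^ 2 / 4 := ⟨_, rfl⟩
  have hy0 : 0 ≤ y := hy ▸ by positivity
  have exp_one := pow_div_factorial_le_exp y hy0 1
  have exp_two := pow_div_factorial_le_exp y hy0 2
  have exp_three := pow_div_factorial_le_exp y hy0 3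
  norm_num [Nat.factorial] at exp_one exp_two exp_three
  have hz2 : z ^ 2 = 4 * y := by rw [hy]; ring
  have cube_le : z ^ 3 ≤ 4 * y + (4 * y) ^ 2 := by
    rw [← hz2]
    nlinarith [sq_nonneg (z * (z - 1)), sq_nonneg z, sq_nonneg (z ^ 2)]
  have fifth_le : z ^ 5 ≤ (4 * y) ^ 2 + (4 * y) ^ 3 := by
    rw [← hz2]
    nlinarith [sq_nonneg (z ^ 2 * (z - 1)), sq_nonneg (z ^ 2), sq_nonneg (z ^ 3)]
  rw [← hy, exp_neg, ← div_eq_mul_inv, div_le_iff₀ (exp_pos _)]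
  linarith

lemma decayProfile_nonneg {t s : ℝ} (ht : 0 < t) (hs : 0 ≤ s) : 0 ≤ decayProfile t s := by
  unfold decayProfile
  positivity

lemma decayProfile_le {t s : ℝ} (ht : 0 < t) (hs : 0 < s) : decayProfile t s ≤ 244 / s ^ 2 := by
  rw [le_div_iff₀ (by positivity)]
  calc decayProfile t s * s ^ 2 = (s / √t) ^ 3 * exp (-((s / √t) ^ 2 / 4)) := by
        rw [decayProfile, neg_sq_div_four_mul ht, rpow_neg_three_half ht]
        field_simp
    _ ≤ (s / √t) ^ 3 * (1 + (s / √t) ^ 2 / 2) * exp (-((s / √t) ^ 2 / 4)) := by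
        gcongr
        exact le_mul_of_one_le_right (by positivity) (le_add_of_nonneg_right (by positivity))
    _ ≤ 244 := pow_mul_exp_neg_sq_le _

lemma hasDerivAt_neg_sq_div_four_mul (t s : ℝ) :
    HasDerivAt (fun s : ℝ => -(s ^ 2) / (4 * t)) (-(2 * s) / (4 * t)) s := by
  simpa using (hasDerivAt_pow 2 s).neg.div_const (4 * t)

lemma hasDerivAt_decayProfile {t : ℝ} (ht : 0 < t) (s : ℝ) :
    HasDerivAt (decayProfile t)
      (t ^ (-(3 : ℝ) / 2) * exp (-(s ^ 2) / (4 * t)) * (1 - s ^ 2 / (2 * t))) s := by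
  refine (((hasDerivAt_id s).mul_const (t ^ (-(3 : ℝ) / 2))).mul
    (hasDerivAt_neg_sq_div_four_mul t s).exp).congr_deriv ?_
  simp only [id]
  field_simp
  ring

lemma abs_deriv_decayProfile_le {t s : ℝ} (ht : 0 < t) (hs : 0 < s) :
    |t ^ (-(3 : ℝ) / 2) * exp (-(s ^ 2) / (4 * t)) * (1 - s ^ 2 / (2 * t))| ≤ 244 / s ^ 3 := by
  have abs_le_add : |1 - s ^ 2 / (2 * t)| ≤ 1 + (s / √t) ^ 2 / 2 := by
    rw [div_pow, sq_sqrt ht.le, div_div, mul_comm t]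
    refine (abs_sub _ _).trans_eq ?_
    rw [abs_one, abs_of_nonneg (by positivity)]
  rw [le_div_iff₀ (by positivity), abs_mul, abs_of_pos (by positivity), neg_sq_div_four_mul ht,
    rpow_neg_three_half ht]
  calc _ ≤ (√t ^ 3)⁻¹ * exp (-((s / √t) ^ 2 / 4)) * (1 + (s / √t) ^ 2 / 2) * s ^ 3 := by gcongr
    _ = (s / √t) ^ 3 * (1 + (s / √t) ^ 2 / 2) * exp (-((s / √t) ^ 2 / 4)) := by field_simp
    _ ≤ 244 := pow_mul_exp_neg_sq_le _

lemma abs_decayProfile_sub_le {t s₀ s s' : ℝ} (ht : 0 < t) (h₀ : 0 < s₀) (hs : s₀ ≤ s)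
    (hs' : s₀ ≤ s') :
    |decayProfile t s - decayProfile t s'| ≤ 244 / s₀ ^ 3 * |s - s'| := by
  refine (convex_Ici s₀).norm_image_sub_le_of_norm_hasDerivWithin_le
    (fun x _ => (hasDerivAt_decayProfile ht x).hasDerivWithinAt) (fun x hx => ?_) hs' hs
  have hx : s₀ ≤ x := hx
  exact (abs_deriv_decayProfile_le ht (h₀.trans_le hx)).trans (by gcongr)

end DecayProfile

section DistanceEstimates

/-- `2ab · sinh d(x, y)`, where `x` and `y` have last coordinates `a` and `b` and horizontal squared
distance `q`. -/
def scaledSinh (a b q : ℝ) : ℝ := √((a ^ 2 + b ^ 2 + q) ^ 2 - (2 * a * b) ^ 2)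

variable {a b q : ℝ}

lemma scaledSinh_nonneg (a b q : ℝ) : 0 ≤ scaledSinh a b q := sqrt_nonneg _

lemma scaledSinh_le (hq : 0 ≤ q) : scaledSinh a b q ≤ a ^ 2 + b ^ 2 + q := by
  unfold scaledSinh
  rw [sqrt_le_left (by positivity)]
  exact sub_le_self _ (sq_nonneg _)

lemma scaledSinh_sq (hq : 0 ≤ q) :
    scaledSinh a b q ^ 2 = (a ^ 2 + b ^ 2 + q) ^ 2 - (2 * a * b) ^ 2 := by
  refine sq_sqrt ?_
  rw [show (a ^ 2 + b ^ 2 + q) ^ 2 - (2 * a * b) ^ 2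
    = ((a - b) ^ 2 + q) * ((a + b) ^ 2 + q) by ring]
  positivity

lemma half_le_scaledSinh (ha : 0 < a) (hb : 0 < b) (h : 4 * a * b ≤ a ^ 2 + b ^ 2 + q) :
    (a ^ 2 + b ^ 2 + q) / 2 ≤ scaledSinh a b q := by
  have hab : 0 < a * b := by positivity
  apply le_sqrt_of_sq_le
  nlinarith

lemma sqrt_coshDist_sq_sub_one (ha : 0 < a) (hb : 0 < b) (q : ℝ) :
    √(coshDist a b q ^ 2 - 1) = scaledSinh a b q / (2 * a * b) := by
  have : coshDist a b q ^ 2 - 1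
      = ((a ^ 2 + b ^ 2 + q) ^ 2 - (2 * a * b) ^ 2) / (2 * a * b) ^ 2 := by
    unfold coshDist
    field_simp
  rw [this, sqrt_div' _ (by positivity), sqrt_sq (by positivity), scaledSinh]

lemma sinh_hypDist (ha : 0 < a) (hb : 0 < b) (h : 1 ≤ coshDist a b q) :
    sinh (hypDist a b q) = scaledSinh a b q / (2 * a * b) := by
  rw [hypDist, sinh_arcosh h, sqrt_coshDist_sq_sub_one ha hb]

lemma hypDist_eq_log (ha : 0 < a) (hb : 0 < b) (q : ℝ) :
    hypDist a b q = log ((a ^ 2 + b ^ 2 + q + scaledSinh a b q) / (2 * a * b)) := by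
  rw [hypDist, arcosh, sqrt_coshDist_sq_sub_one ha hb, coshDist, ← add_div]

lemma log_le_hypDist (ha : 0 < a) (hb : 0 < b) (hq : 0 ≤ q) :
    log ((a ^ 2 + b ^ 2 + q) / (2 * a * b)) ≤ hypDist a b q := by
  rw [hypDist_eq_log ha hb]
  have hS := scaledSinh_nonneg a b q
  exact log_le_log (by positivity)
    (div_le_div_of_nonneg_right (le_add_of_nonneg_right hS) (by positivity))

lemma le_hypDist_of_exp_mul_le {d : ℝ} (ha : 0 < a) (hb : 0 < b) (hq : 0 ≤ q)
    (hd : exp d * (2 * a * b) ≤ a ^ 2 + b ^ 2 + q) : d ≤ hypDist a b q := by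
  refine le_trans ?_ (log_le_hypDist ha hb hq)
  rwa [le_log_iff_exp_le (by positivity), le_div_iff₀ (by positivity)]

lemma hypDist_le_log (ha : 0 < a) (hb : 0 < b) (hq : 0 ≤ q) :
    hypDist a b q ≤ log (2 * (a ^ 2 + b ^ 2 + q) / (2 * a * b)) := by
  rw [hypDist_eq_log ha hb]
  have hS := scaledSinh_nonneg a b q
  gcongr
  linarith [scaledSinh_le (a := a) (b := b) hq]

lemma scaledSinh_div_le_hypDist (ha : 0 < a) (hb : 0 < b) (hq : 0 ≤ q) :
    scaledSinh a b q / (2 * (a ^ 2 + b ^ 2 + q)) ≤ hypDist a b q := by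
  rw [hypDist_eq_log ha hb]
  have hS := scaledSinh_nonneg a b q
  have hSD := scaledSinh_le (a := a) (b := b) hq
  have hab : 2 * a * b ≤ a ^ 2 + b ^ 2 + q := by nlinarith [sq_nonneg (a - b)]
  have : 0 < 2 * a * b := by positivity
  set D := a ^ 2 + b ^ 2 + q
  set S := scaledSinh a b q
  calc S / (2 * D) ≤ S / (D + S) := by gcongr; linarith
    _ = 1 - D / (D + S) := by rw [one_sub_div (by positivity), add_sub_cancel_left]
    _ ≤ 1 - 2 * a * b / (D + S) := by gcongr
    _ = 1 - ((D + S) / (2 * a * b))⁻¹ := by rw [inv_div]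
    _ ≤ log ((D + S) / (2 * a * b)) := one_sub_inv_le_log_of_pos (by positivity)

lemma hypDist_zero (ha : 0 < a) (hb : 0 < b) : hypDist a b 0 = |log a - log b| := by
  have : coshDist a b 0 = cosh |log a - log b| := by
    rw [cosh_abs, cosh_eq, neg_sub, exp_sub, exp_sub, exp_log ha, exp_log hb, coshDist]
    field_simp
    ring
  rw [hypDist, this, arcosh_cosh (abs_nonneg _)]

lemma one_lt_coshDist (ha : 0 < a) (hb : 0 < b) (hq : 0 < q) : 1 < coshDist a b q := by
  rw [coshDist, lt_div_iff₀ (by positivity)]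
  nlinarith [sq_nonneg (a - b)]

lemma continuous_coshDist (a b : ℝ) : Continuous (coshDist a b) := by
  unfold coshDist
  fun_prop

lemma continuousOn_hypDist (ha : 0 < a) (hb : 0 < b) : ContinuousOn (hypDist a b) (Ici 0) :=
  continuousOn_arcosh.comp (continuous_coshDist a b).continuousOn
    fun _ hq => one_le_coshDist ha hb hq

lemma hasDerivAt_hypDist (ha : 0 < a) (hb : 0 < b) (h : 1 < coshDist a b q) :
    HasDerivAt (hypDist a b) (scaledSinh a b q)⁻¹ q := by
  have hcosh : HasDerivAt (coshDist a b) (1 / (2 * a * b)) q := by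
    unfold coshDist
    simpa using ((hasDerivAt_id q).const_add (a ^ 2 + b ^ 2)).div_const (2 * a * b)
  refine ((hasDerivAt_arcosh h).comp q hcosh).congr_deriv ?_
  rw [sqrt_coshDist_sq_sub_one ha hb]
  field_simp

lemma tendsto_hypDist_atTop (ha : 0 < a) (hb : 0 < b) : Tendsto (hypDist a b) atTop atTop := by
  have hcosh : Tendsto (fun q => (a ^ 2 + b ^ 2 + q) / (2 * a * b)) atTop atTop :=
    (tendsto_atTop_add_const_left _ _ tendsto_id).atTop_div_const (by positivity)
  refine tendsto_atTop_mono' _ ?_ (tendsto_log_atTop.comp hcosh)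
  filter_upwards [eventually_ge_atTop 0] with q hq
  exact log_le_hypDist ha hb hq

end DistanceEstimates

section HeatKernelMass

lemma heatKer_eq {t a b q : ℝ} (ha : 0 < a) (hb : 0 < b) (h : 1 < coshDist a b q) :
    heatKer t a b q = 2 * heatConst * (decayProfile t (hypDist a b q) / scaledSinh a b q) := by
  have hd : hypDist a b q ≠ 0 := (arcosh_pos h).ne'
  have hS : scaledSinh a b q ≠ 0 := fun h₀ => hd <| by
    rw [← sinh_eq_zero, sinh_hypDist ha hb h.le, h₀, zero_div]
  rw [heatKer, heatProfile, if_neg hd, sinh_hypDist ha hb h.le, decayProfile]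
  field_simp

lemma hasDerivAt_neg_exp_neg_hypDist_sq {t a b q : ℝ} (ht : 0 < t) (ha : 0 < a) (hb : 0 < b)
    (hq : 0 < q) :
    HasDerivAt (fun q => -(4 * heatConst * (t * t ^ (-(3 : ℝ) / 2)) *
      exp (-(hypDist a b q ^ 2) / (4 * t)))) (heatKer t a b q) q := by
  have hcosh := one_lt_coshDist ha hb hq
  refine ((((hasDerivAt_neg_sq_div_four_mul t _).comp q
    (hasDerivAt_hypDist ha hb hcosh)).exp.const_mul _).neg).congr_deriv ?_
  rw [heatKer_eq ha hb hcosh, decayProfile]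
  simp only [Function.comp_apply]
  field_simp

lemma tendsto_exp_neg_hypDist_sq_atTop {t a b : ℝ} (ht : 0 < t) (ha : 0 < a) (hb : 0 < b) :
    Tendsto (fun q => exp (-(hypDist a b q ^ 2) / (4 * t))) atTop (nhds 0) := by
  refine tendsto_exp_atBot.comp ?_
  simp only [neg_div]
  exact tendsto_neg_atTop_atBot.comp <| ((tendsto_pow_atTop two_ne_zero).comp
    (tendsto_hypDist_atTop ha hb)).atTop_div_const (by positivity)

lemma lintegral_Ioi_heatKer {t a b : ℝ} (ht : 0 < t) (ha : 0 < a) (hb : 0 < b) :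
    ∫⁻ q in Ioi (0 : ℝ), ENNReal.ofReal (heatKer t a b q)
      = ENNReal.ofReal (4 * heatConst * (t * t ^ (-(3 : ℝ) / 2)) *
          exp (-((log a - log b) ^ 2) / (4 * t))) := by
  rw [lintegral_Ioi_eq_of_hasDerivAt_of_continuousWithinAt ?_
    (fun q hq => hasDerivAt_neg_exp_neg_hypDist_sq ht ha hb hq)
    (fun q hq => heatKer_nonneg ht.le ha hb (le_of_lt hq))
    ((tendsto_exp_neg_hypDist_sq_atTop ht ha hb).const_mul _).neg]
  · rw [hypDist_zero ha hb, sq_abs, mul_zero, neg_zero, zero_sub, neg_neg]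
  · have := continuousOn_hypDist ha hb 0 self_mem_Ici
    fun_prop

lemma lintegral_exp_neg_sq_div {t : ℝ} (ht : 0 < t) :
    ∫⁻ s : ℝ, ENNReal.ofReal (exp (-(s ^ 2) / (4 * t))) = ENNReal.ofReal √(π * (4 * t)) := by
  have eq_mul (s : ℝ) : -(s ^ 2) / (4 * t) = -(4 * t)⁻¹ * s ^ 2 := by
    rw [neg_div, div_eq_inv_mul, neg_mul]
  simp only [eq_mul]
  rw [← ofReal_integral_eq_lintegral_ofReal
    (integrable_exp_neg_mul_sq (by positivity)) (Eventually.of_forall fun s => (exp_pos _).le),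
    integral_gaussian, div_inv_eq_mul]

lemma lintegral_prod_heatKer {t a b : ℝ} (ht : 0 < t) (ha : 0 < a) (hb : 0 < b) (c : ℝ × ℝ) :
    ∫⁻ p : ℝ × ℝ, ENNReal.ofReal (heatKer t a b ((c.1 - p.1) ^ 2 + (c.2 - p.2) ^ 2))
      = ENNReal.ofReal (4 * π * heatConst * (t * t ^ (-(3 : ℝ) / 2))) *
          ENNReal.ofReal (exp (-((log a - log b) ^ 2) / (4 * t))) := by
  have hm : Measurable fun q => ENNReal.ofReal (heatKer t a b q) :=
    ((measurable_heatKer t).comp (f := fun q : ℝ => (a, b, q)) (by fun_prop)).ennreal_ofReal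
  have hc := heatConst_pos
  refine (lintegral_sub_left_eq_self
    (fun p : ℝ × ℝ => ENNReal.ofReal (heatKer t a b (p.1 ^ 2 + p.2 ^ 2))) c).trans ?_
  rw [lintegral_sq_add_sq hm, lintegral_Ioi_heatKer ht ha hb, ← ENNReal.ofReal_mul pi_pos.le,
    ← ENNReal.ofReal_mul (by positivity)]
  ring_nf

lemma lintegral_heatKer {t : ℝ} (ht : 0 < t) {x : G} (hx : 0 < x.2.2) :
    ∫⁻ y, ENNReal.ofReal (heatKer t x.2.2 y.2.2 (horizDistSq x y)) ∂ρG = 1 := by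
  have hc := heatConst_pos
  have heatConst_eq : heatConst = (8 * (π * √π))⁻¹ := by
    rw [heatConst, show (3 : ℝ) / 2 = 1 + 1 / 2 by norm_num, rpow_add pi_pos, rpow_one,
      sqrt_eq_rpow]
  rw [lintegral_rhoG (measurable_heatKer_right t x).ennreal_ofReal]
  calc _ = ∫⁻ s : ℝ, ENNReal.ofReal (4 * π * heatConst * (t * t ^ (-(3 : ℝ) / 2))) *
          ENNReal.ofReal (exp (-((log x.2.2 - s) ^ 2) / (4 * t))) := by
        refine lintegral_congr fun s => ?_
        rw [← log_exp s, ← lintegral_prod_heatKer ht hx (exp_pos s) (x.1, x.2.1), log_exp]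
        rfl
    _ = ENNReal.ofReal (4 * π * heatConst * (t * t ^ (-(3 : ℝ) / 2)) * √(π * (4 * t))) := by
        rw [lintegral_const_mul _ (by fun_prop), lintegral_sub_left_eq_self
          (fun s : ℝ => ENNReal.ofReal (exp (-(s ^ 2) / (4 * t)))), lintegral_exp_neg_sq_div ht,
          ← ENNReal.ofReal_mul (by positivity)]
    _ = 1 := by
        rw [heatConst_eq, rpow_neg_three_half ht, show π * (4 * t) = π * (2 ^ 2 * t) by ring,
          sqrt_mul pi_pos.le, sqrt_mul (by positivity), sqrt_sq (by norm_num), ← ENNReal.ofReal_one]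
        congr 1
        have := pi_pos
        have := sq_sqrt ht.le
        field_simp
        linarith

end HeatKernelMass

section KernelEstimates

lemma heatKer_le {t a b q d₀ S₀ : ℝ} (ht : 0 < t) (ha : 0 < a) (hb : 0 < b)
    (h : 1 < coshDist a b q) (hd₀ : 0 < d₀) (hd : d₀ ≤ hypDist a b q) (hS₀ : 0 < S₀)
    (hS : S₀ ≤ scaledSinh a b q) :
    heatKer t a b q ≤ 488 * heatConst / (d₀ ^ 2 * S₀) := by
  have hc := heatConst_pos
  have hprofile : decayProfile t (hypDist a b q) ≤ 244 / d₀ ^ 2 :=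
    (decayProfile_le ht (hd₀.trans_le hd)).trans (by gcongr)
  rw [heatKer_eq ha hb h]
  calc 2 * heatConst * (decayProfile t (hypDist a b q) / scaledSinh a b q)
      ≤ 2 * heatConst * (244 / d₀ ^ 2 / S₀) := by gcongr
    _ = 488 * heatConst / (d₀ ^ 2 * S₀) := by ring

lemma abs_heatKer_sub_le {t a b q b' q' d₀ S₀ : ℝ} (ht : 0 < t) (ha : 0 < a) (hb : 0 < b)
    (hb' : 0 < b') (h : 1 < coshDist a b q) (h' : 1 < coshDist a b' q') (hd₀ : 0 < d₀)
    (hd : d₀ ≤ hypDist a b q) (hd' : d₀ ≤ hypDist a b' q') (hS₀ : 0 < S₀)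
    (hS : S₀ ≤ scaledSinh a b q) (hS' : S₀ ≤ scaledSinh a b' q') :
    |heatKer t a b q - heatKer t a b' q'| ≤
      488 * heatConst * (|hypDist a b q - hypDist a b' q'| / (d₀ ^ 3 * S₀)
        + |scaledSinh a b q - scaledSinh a b' q'| / (d₀ ^ 2 * S₀ ^ 2)) := by
  have hc := heatConst_pos
  have hprofile : decayProfile t (hypDist a b' q') ≤ 244 / d₀ ^ 2 :=
    (decayProfile_le ht (hd₀.trans_le hd')).trans (by gcongr)
  have hlip := abs_decayProfile_sub_le ht hd₀ hd hd'
  have hnonneg := decayProfile_nonneg ht (hd₀.le.trans hd')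
  rw [heatKer_eq ha hb h, heatKer_eq ha hb' h']
  set d := hypDist a b q
  set d' := hypDist a b' q'
  set S := scaledSinh a b q
  set S' := scaledSinh a b' q'
  have hS_pos : 0 < S := hS₀.trans_le hS
  have hS'_pos : 0 < S' := hS₀.trans_le hS'
  calc |2 * heatConst * (decayProfile t d / S) - 2 * heatConst * (decayProfile t d' / S')|
      = 2 * heatConst * |(decayProfile t d - decayProfile t d') / S
          + decayProfile t d' * (S' - S) / (S * S')| := by
        rw [← abs_of_pos (by positivity : 0 < 2 * heatConst), ← abs_mul,
          abs_of_pos (by positivity : 0 < 2 * heatConst)]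
        congr 1
        field_simp
        ring
    _ ≤ 2 * heatConst * (|decayProfile t d - decayProfile t d'| / S
          + decayProfile t d' * |S - S'| / (S * S')) := by
        gcongr
        refine (abs_add_le _ _).trans_eq ?_
        rw [abs_div, abs_div, abs_mul, abs_of_pos hS_pos, abs_of_nonneg hnonneg,
          abs_of_pos (mul_pos hS_pos hS'_pos), abs_sub_comm S' S]
    _ ≤ 2 * heatConst * (244 / d₀ ^ 3 * |d - d'| / S₀ + 244 / d₀ ^ 2 * |S - S'| / (S₀ * S₀)) := by
        gcongr
    _ = _ := by ring

lemma two_le_coshDist {a b q : ℝ} (ha : 0 < a) (hb : 0 < b)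
    (h : 4 * a * b ≤ a ^ 2 + b ^ 2 + q) : 2 ≤ coshDist a b q := by
  rw [coshDist, le_div_iff₀ (by positivity)]
  linarith

lemma heatKer_le_of_exp_mul_le {t a b q d₀ : ℝ} (ht : 0 < t) (ha : 0 < a) (hb : 0 < b)
    (hq : 0 ≤ q) (h : 4 * a * b ≤ a ^ 2 + b ^ 2 + q) (hd₀ : 0 < d₀)
    (hd : exp d₀ * (2 * a * b) ≤ a ^ 2 + b ^ 2 + q) :
    heatKer t a b q ≤ 976 * heatConst / (d₀ ^ 2 * (a ^ 2 + b ^ 2 + q)) := by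
  have hcosh : 1 < coshDist a b q := one_lt_two.trans_le (two_le_coshDist ha hb h)
  calc heatKer t a b q ≤ 488 * heatConst / (d₀ ^ 2 * ((a ^ 2 + b ^ 2 + q) / 2)) :=
        heatKer_le ht ha hb hcosh hd₀ (le_hypDist_of_exp_mul_le ha hb hq hd) (by positivity)
          (half_le_scaledSinh ha hb h)
    _ = 976 * heatConst / (d₀ ^ 2 * (a ^ 2 + b ^ 2 + q)) := by
        field_simp
        ring

end KernelEstimates

section FarEstimates

variable {t R a b b' q q' s : ℝ}

lemma two_le_exp_one : (2 : ℝ) ≤ exp 1 := by linarith [add_one_le_exp 1]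

lemma four_le_exp_two : (4 : ℝ) ≤ exp 2 := by
  rw [show (2 : ℝ) = 1 + 1 by norm_num, exp_add]
  nlinarith [two_le_exp_one]

lemma heatKer_le_of_log_le (ht : 0 < t) (hR : 1 ≤ R) (ha : 0 < a) (hb : exp (-R) ≤ b)
    (hq : 0 ≤ q) (hv : log a ≤ -(20 * R)) :
    heatKer t a b q ≤ 3904 * heatConst / (log a ^ 2 * (exp (-(2 * R)) + q)) := by
  have hb₀ : 0 < b := (exp_pos _).trans_le hb
  have hc := heatConst_pos
  obtain ⟨v, rfl⟩ : ∃ v, a = exp v := ⟨log a, (exp_log ha).symm⟩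
  rw [log_exp] at hv ⊢
  have hv₀ : v ≠ 0 := by linarith
  have four_mul_le : 4 * exp v ≤ b := calc
    4 * exp v ≤ exp 2 * exp v := by gcongr; exact four_le_exp_two
    _ = exp (2 + v) := (exp_add _ _).symm
    _ ≤ exp (-R) := exp_le_exp.2 (by linarith)
    _ ≤ b := hb
  have exp_mul_le : exp (-v / 2) * (2 * exp v) ≤ b := calc
    exp (-v / 2) * (2 * exp v) ≤ exp (-v / 2) * (exp 1 * exp v) := by
      gcongr; exact two_le_exp_one
    _ = exp (1 + v / 2) := by rw [← exp_add, ← exp_add]; ring_nf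
    _ ≤ exp (-R) := exp_le_exp.2 (by linarith)
    _ ≤ b := hb
  have exp_le_sq : exp (-(2 * R)) ≤ b ^ 2 := by
    rw [show -(2 * R) = -R + -R by ring, exp_add, ← sq]
    gcongr
  calc heatKer t (exp v) b q ≤ 976 * heatConst / ((-v / 2) ^ 2 * (exp v ^ 2 + b ^ 2 + q)) :=
        heatKer_le_of_exp_mul_le ht ha hb₀ hq (by nlinarith [sq_nonneg (exp v)]) (by linarith)
          (by nlinarith [sq_nonneg (exp v)])
    _ ≤ 976 * heatConst / ((-v / 2) ^ 2 * (exp (-(2 * R)) + q)) := by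
        have : 0 < exp (-(2 * R)) + q := by positivity
        have : 0 < (-v / 2) ^ 2 := pow_pos (by linarith) 2
        gcongr
        linarith [sq_nonneg (exp v)]
    _ = 3904 * heatConst / (v ^ 2 * (exp (-(2 * R)) + q)) := by
        field_simp
        norm_num

lemma heatKer_le_of_le_log (ht : 0 < t) (hR : 1 ≤ R) (ha : 0 < a) (hb : 0 < b) (hbR : b ≤ exp R)
    (hq : 0 ≤ q) (hv : 20 * R ≤ log a) :
    heatKer t a b q ≤ 976 * heatConst * exp (-(2 * log a)) := by
  have hc := heatConst_pos
  have exp_two_mul_le : exp 2 * b ≤ a := calc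
    exp 2 * b ≤ exp 2 * exp R := by gcongr
    _ = exp (2 + R) := (exp_add _ _).symm
    _ ≤ exp (log a) := exp_le_exp.2 (by linarith)
    _ = a := exp_log ha
  have four_mul_le : 4 * b ≤ a :=
    (mul_le_mul_of_nonneg_right four_le_exp_two hb.le).trans exp_two_mul_le
  have exp_one_mul_le : exp 1 * (2 * b) ≤ a := by
    refine le_trans ?_ exp_two_mul_le
    rw [show (2 : ℝ) = 1 + 1 by norm_num, exp_add, mul_assoc, one_add_one_eq_two]
    gcongr
    exact two_le_exp_one
  calc heatKer t a b q ≤ 976 * heatConst / (1 ^ 2 * (a ^ 2 + b ^ 2 + q)) :=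
        heatKer_le_of_exp_mul_le ht ha hb hq (by nlinarith [sq_nonneg b]) one_pos
          (by nlinarith [sq_nonneg b])
    _ ≤ 976 * heatConst / a ^ 2 := by
        rw [one_pow, one_mul]
        gcongr
        linarith [sq_nonneg b]
    _ = 976 * heatConst * exp (-(2 * log a)) := by
        rw [exp_neg, mul_comm 2, exp_mul, exp_log ha, rpow_two, div_eq_mul_inv]

lemma add_sq_add_mem_Icc (hb : 0 < b) (hbs : 64 * b ≤ s) (hq : s ^ 2 / 4 ≤ q)
    (hq' : q ≤ 3 * s ^ 2) :
    a ^ 2 + b ^ 2 + q ∈ Icc ((a ^ 2 + s ^ 2) / 4) (4 * (a ^ 2 + s ^ 2)) := by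
  have : b ^ 2 ≤ s ^ 2 := by gcongr; linarith
  constructor <;> linarith [sq_nonneg a, sq_nonneg b, sq_nonneg s]

lemma four_mul_le_add_sq_add (ha : 0 < a) (hbs : 64 * b ≤ s) (hq : s ^ 2 / 4 ≤ q) :
    4 * a * b ≤ a ^ 2 + b ^ 2 + q := by
  have : a * (64 * b) ≤ a * s := by gcongr
  nlinarith only [this, sq_nonneg (a - s), sq_nonneg b, sq_nonneg a, sq_nonneg s, hq]

lemma log_div_two_add_le_hypDist (ha : 0 < a) (hb : 0 < b) (hbs : 8 * b ≤ √s)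
    (hq : s ^ 2 / 4 ≤ q) : log s / 2 + |log a - log s| ≤ hypDist a b q := by
  have hs : 0 < s := sqrt_pos.1 (by linarith)
  have hq₀ : 0 ≤ q := le_trans (by positivity) hq
  have eight_mul_le : 8 * b * √s ≤ s := by
    nth_rw 2 [← mul_self_sqrt hs.le]
    gcongr
  have key : exp (log s / 2 + |log a - log s|) * (2 * a * b) ≤ (a ^ 2 + s ^ 2) / 4 := by
    have exp_half : exp (log s / 2) = √s := by rw [← log_sqrt hs.le, exp_log (sqrt_pos.2 hs)]
    rw [exp_add, exp_half]
    rcases le_total (log s) (log a) with h | h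
    · rw [abs_of_nonneg (sub_nonneg.2 h), exp_sub, exp_log ha, exp_log hs]
      calc √s * (a / s) * (2 * a * b) = a ^ 2 * (8 * b * √s) / (4 * s) := by ring
        _ ≤ a ^ 2 * s / (4 * s) := by gcongr
        _ = a ^ 2 / 4 := by field_simp
        _ ≤ (a ^ 2 + s ^ 2) / 4 := by linarith [sq_nonneg s]
    · rw [abs_of_nonpos (sub_nonpos.2 h), neg_sub, exp_sub, exp_log ha, exp_log hs]
      calc √s * (s / a) * (2 * a * b) = s * (8 * b * √s) / 4 := by field_simp; norm_num
        _ ≤ s * s / 4 := by gcongr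
        _ ≤ (a ^ 2 + s ^ 2) / 4 := by linarith [sq_nonneg a]
  exact le_hypDist_of_exp_mul_le ha hb hq₀ (by linarith [sq_nonneg a, sq_nonneg b])

lemma thirtyTwo_le_exp_four_mul (hR : 1 ≤ R) : 32 ≤ exp (4 * R) := calc
  (32 : ℝ) ≤ 2.7 ^ 4 := by norm_num
  _ ≤ exp 1 ^ 4 := by gcongr; linarith [exp_one_gt_d9]
  _ = exp (4 * 1) := by rw [exp_mul, rpow_one, ← exp_nat_mul]; norm_num
  _ ≤ exp (4 * R) := by gcongr

lemma hypDist_sub_hypDist_le {Q : ℝ} (hR : 1 ≤ R) (ha : 0 < a) (hb : exp (-R) ≤ b)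
    (hbR : b ≤ exp R) (hb' : exp (-R) ≤ b') (hq : 0 ≤ q) (hq' : 0 ≤ q') (hQ : 0 < Q)
    (hD : Q / 4 ≤ a ^ 2 + b ^ 2 + q) (hD' : a ^ 2 + b' ^ 2 + q' ≤ 4 * Q) :
    hypDist a b' q' - hypDist a b q ≤ 6 * R := by
  have hb₀ := (exp_pos _).trans_le hb
  have hb'₀ := (exp_pos _).trans_le hb'
  have le_dist := log_le_hypDist ha hb₀ hq
  have dist_le := hypDist_le_log ha hb'₀ hq'
  set D := a ^ 2 + b ^ 2 + q
  set D' := a ^ 2 + b' ^ 2 + q'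
  have hD₀ : 0 < D := lt_of_lt_of_le (by positivity) hD
  have : 0 < D' := by positivity
  have b_le : b ≤ exp (2 * R) * b' := calc
    b ≤ exp (2 * R) * exp (-R) := by rw [← exp_add]; ring_nf; exact hbR
    _ ≤ exp (2 * R) * b' := by gcongr
  have D'_le : 2 * D' ≤ exp (4 * R) * D := calc
    2 * D' ≤ 32 * D := by linarith
    _ ≤ exp (4 * R) * D := by gcongr; exact thirtyTwo_le_exp_four_mul hR
  have log_le : log (2 * D' / (2 * a * b')) ≤ 6 * R + log (D / (2 * a * b)) := by
    rw [← log_exp (6 * R), ← log_mul (by positivity) (by positivity)]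
    refine log_le_log (by positivity) ?_
    calc 2 * D' / (2 * a * b') ≤ exp (4 * R) * D / (2 * a * b') := by gcongr
      _ = exp (4 * R) * D * b / (b' * (2 * a * b)) := by field_simp
      _ ≤ exp (4 * R) * D * (exp (2 * R) * b') / (b' * (2 * a * b)) := by gcongr
      _ = exp (6 * R) * (D / (2 * a * b)) := by
          rw [show 6 * R = 4 * R + 2 * R by ring, exp_add]
          field_simp
  linarith

lemma abs_hypDist_sub_hypDist_le {Q : ℝ} (hR : 1 ≤ R) (ha : 0 < a) (hb : b ∈ Icc (exp (-R)) (exp R))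
    (hb' : b' ∈ Icc (exp (-R)) (exp R)) (hq : 0 ≤ q) (hq' : 0 ≤ q') (hQ : 0 < Q)
    (hD : a ^ 2 + b ^ 2 + q ∈ Icc (Q / 4) (4 * Q))
    (hD' : a ^ 2 + b' ^ 2 + q' ∈ Icc (Q / 4) (4 * Q)) :
    |hypDist a b q - hypDist a b' q'| ≤ 6 * R :=
  abs_sub_le_iff.2 ⟨hypDist_sub_hypDist_le hR ha hb'.1 hb'.2 hb.1 hq' hq hQ hD'.1 hD.2,
    hypDist_sub_hypDist_le hR ha hb.1 hb.2 hb'.1 hq hq' hQ hD.1 hD'.2⟩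

lemma abs_scaledSinh_sub_le_of_far {Q W : ℝ} (hq : 0 ≤ q) (hq' : 0 ≤ q') (hQ : 0 < Q) (hW : 0 ≤ W)
    (haQ : a ^ 2 ≤ Q) (hD : a ^ 2 + b ^ 2 + q ≤ 4 * Q) (hD' : a ^ 2 + b' ^ 2 + q' ≤ 4 * Q)
    (hS : Q / 8 ≤ scaledSinh a b q) (hS' : Q / 8 ≤ scaledSinh a b' q')
    (hbb : |b ^ 2 - b' ^ 2| ≤ W) (hqq : |q - q'| ≤ 6 * W) :
    |scaledSinh a b q - scaledSinh a b' q'| ≤ 240 * W := by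
  have difference_of_squares :
      (scaledSinh a b q - scaledSinh a b' q') * (scaledSinh a b q + scaledSinh a b' q')
        = (b ^ 2 - b' ^ 2 + (q - q')) * (a ^ 2 + b ^ 2 + q + (a ^ 2 + b' ^ 2 + q'))
          - 4 * a ^ 2 * (b ^ 2 - b' ^ 2) := by
    linear_combination scaledSinh_sq (a := a) (b := b) hq - scaledSinh_sq (a := a) (b := b') hq'
  set S := scaledSinh a b q
  set S' := scaledSinh a b' q'
  have hsum : Q / 4 ≤ S + S' := by linarith
  have first_factor : |b ^ 2 - b' ^ 2 + (q - q')| ≤ W + 6 * W :=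
    (abs_add_le _ _).trans (add_le_add hbb hqq)
  have second_factor : |a ^ 2 + b ^ 2 + q + (a ^ 2 + b' ^ 2 + q')| ≤ 4 * Q + 4 * Q := by
    rw [abs_of_nonneg (by positivity)]
    exact add_le_add hD hD'
  refine le_of_mul_le_mul_right ?_ (by positivity : 0 < Q / 4)
  calc |S - S'| * (Q / 4) ≤ |S - S'| * (S + S') := by gcongr
    _ = |(S - S') * (S + S')| := by
        rw [abs_mul, abs_of_nonneg (a := S + S') (le_trans (by positivity) hsum)]
    _ ≤ |b ^ 2 - b' ^ 2 + (q - q')| * |a ^ 2 + b ^ 2 + q + (a ^ 2 + b' ^ 2 + q')|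
          + 4 * a ^ 2 * |b ^ 2 - b' ^ 2| := by
        rw [difference_of_squares]
        refine (abs_sub _ _).trans_eq ?_
        rw [abs_mul, abs_mul, abs_of_nonneg (a := 4 * a ^ 2) (by positivity)]
    _ ≤ (W + 6 * W) * (4 * Q + 4 * Q) + 4 * Q * W := by gcongr
    _ = 240 * W * (Q / 4) := by ring

lemma far_lower_bounds (ha : 0 < a) (hb : 0 < b) (hbs : 64 * b ≤ s) (hbs' : 8 * b ≤ √s)
    (hq : q ∈ Icc (s ^ 2 / 4) (3 * s ^ 2)) :
    1 < coshDist a b q ∧ log s / 2 + |log a - log s| ≤ hypDist a b q ∧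
      (a ^ 2 + s ^ 2) / 8 ≤ scaledSinh a b q := by
  have hab := four_mul_le_add_sq_add ha hbs hq.1
  refine ⟨one_lt_two.trans_le (two_le_coshDist ha hb hab),
    log_div_two_add_le_hypDist ha hb hbs' hq.1, ?_⟩
  linarith [(add_sq_add_mem_Icc (a := a) hb hbs hq.1 hq.2).1, half_le_scaledSinh ha hb hab]

lemma far_difference_bound_le {L p v Q : ℝ} (hR : 0 ≤ R) (hL : 0 ≤ L) (hs : 0 < s) (hp : 0 < p)
    (hQ : s ^ 2 ≤ Q) :
    6 * R / ((p / 2 + |v - p|) ^ 3 * (Q / 8))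
        + 240 * (L * s) / ((p / 2 + |v - p|) ^ 2 * (Q / 8) ^ 2)
      ≤ 1 / (p ^ 2 / 4 + (v - p) ^ 2) * (96 * R / (p * s ^ 2) + 15360 * L / s ^ 3) := by
  have sq_add_sq_le : p ^ 2 / 4 + (v - p) ^ 2 ≤ (p / 2 + |v - p|) ^ 2 := by
    rw [← sq_abs (v - p)]
    nlinarith only [mul_nonneg hp.le (abs_nonneg (v - p))]
  have cube_le : p / 2 * (p ^ 2 / 4 + (v - p) ^ 2) ≤ (p / 2 + |v - p|) ^ 3 := by
    rw [pow_succ' _ 2]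
    gcongr
    exact le_add_of_nonneg_right (abs_nonneg _)
  have : 0 < p ^ 2 / 4 + (v - p) ^ 2 := by positivity
  calc _ ≤ 6 * R / (p / 2 * (p ^ 2 / 4 + (v - p) ^ 2) * (s ^ 2 / 8))
        + 240 * (L * s) / ((p ^ 2 / 4 + (v - p) ^ 2) * (s ^ 2 / 8) ^ 2) := by gcongr
    _ = _ := by
        field_simp
        ring

lemma abs_heatKer_sub_le_of_far {L : ℝ} (ht : 0 < t) (hR : 1 ≤ R) (hL : exp (2 * R) ≤ L)
    (hLs : 64 * L ≤ s) (ha : 0 < a) (hb : b ∈ Icc (exp (-R)) (exp R))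
    (hb' : b' ∈ Icc (exp (-R)) (exp R)) (hq : q ∈ Icc (s ^ 2 / 4) (3 * s ^ 2))
    (hq' : q' ∈ Icc (s ^ 2 / 4) (3 * s ^ 2)) (hqq : |q - q'| ≤ 6 * (L * s)) :
    |heatKer t a b q - heatKer t a b' q'| ≤
      488 * heatConst * (1 / (log s ^ 2 / 4 + (log a - log s) ^ 2) *
        (96 * R / (log s * s ^ 2) + 15360 * L / s ^ 3)) := by
  have hc := heatConst_pos
  have hb₀ : 0 < b := (exp_pos _).trans_le hb.1
  have hb'₀ : 0 < b' := (exp_pos _).trans_le hb'.1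
  have sq_le_L : exp R ^ 2 ≤ L := by rwa [← exp_nat_mul, Nat.cast_ofNat]
  have one_le_exp_R : 1 ≤ exp R := one_le_exp (by linarith)
  have exp_R_le : exp R ≤ L := by nlinarith only [sq_le_L, one_le_exp_R]
  have hs : 0 < s := by linarith
  have sqrt_le : 8 * exp R ≤ √s := le_sqrt_of_sq_le (by linarith)
  have log_pos : 0 < log s := Real.log_pos (by linarith)
  have hq₀ : 0 ≤ q := le_trans (by positivity) hq.1
  have hq'₀ : 0 ≤ q' := le_trans (by positivity) hq'.1
  have hbs : 64 * b ≤ s := by linarith [hb.2]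
  have hb's : 64 * b' ≤ s := by linarith [hb'.2]
  have hD := add_sq_add_mem_Icc (a := a) hb₀ hbs hq.1 hq.2
  have hD' := add_sq_add_mem_Icc (a := a) hb'₀ hb's hq'.1 hq'.2
  obtain ⟨hcosh, hd, hS⟩ := far_lower_bounds ha hb₀ hbs (by linarith [hb.2]) hq
  obtain ⟨hcosh', hd', hS'⟩ := far_lower_bounds ha hb'₀ hb's (by linarith [hb'.2]) hq'
  have hQ : 0 < a ^ 2 + s ^ 2 := by positivity
  have hbb : |b ^ 2 - b' ^ 2| ≤ L * s := by
    have : L ≤ L * s := le_mul_of_one_le_right (by linarith) (by linarith)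
    have : b ^ 2 ≤ exp R ^ 2 := by gcongr; exact hb.2
    have : b' ^ 2 ≤ exp R ^ 2 := by gcongr; exact hb'.2
    exact abs_sub_le_iff.2 ⟨by linarith [sq_nonneg b'], by linarith [sq_nonneg b]⟩
  have dist_sub_le := abs_hypDist_sub_hypDist_le hR ha hb hb' hq₀ hq'₀ hQ hD hD'
  have sinh_sub_le := abs_scaledSinh_sub_le_of_far hq₀ hq'₀ hQ
    (mul_nonneg (by linarith) hs.le) (by linarith [sq_nonneg s]) hD.2 hD'.2 hS hS' hbb hqq
  refine (abs_heatKer_sub_le ht ha hb₀ hb'₀ hcosh hcosh' (by positivity) hd hd' (by positivity)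
    hS hS').trans ?_
  gcongr
  refine le_trans ?_ (far_difference_bound_le (by linarith) (by linarith) hs log_pos
    (by linarith [sq_nonneg a] : s ^ 2 ≤ a ^ 2 + s ^ 2))
  gcongr

end FarEstimates

section BoxGeometry

variable {L r s : ℝ} {x y y' : G}

lemma exp_mem_Icc_of_mem_centredBox (hy : y ∈ centredBox L r) :
    y.2.2 ∈ Icc (exp (-r)) (exp r) := hy.2.2

lemma height_pos_of_mem_centredBox (hy : y ∈ centredBox L r) : 0 < y.2.2 :=
  (exp_pos _).trans_le hy.2.2.1

lemma sq_le_of_mem_centredBox (hy : y ∈ centredBox L r) :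
    y.1 ^ 2 ≤ (L / 2) ^ 2 ∧ y.2.1 ^ 2 ≤ (L / 2) ^ 2 :=
  ⟨sq_le_sq' (abs_le.1 hy.1).1 (abs_le.1 hy.1).2,
    sq_le_sq' (abs_le.1 hy.2.1).1 (abs_le.1 hy.2.1).2⟩

lemma centredBox_subset {L' r' : ℝ} (hL : L ≤ L') (hr : r ≤ r') :
    centredBox L r ⊆ centredBox L' r' := fun _ hy =>
  ⟨hy.1.trans (by linarith), hy.2.1.trans (by linarith),
    (exp_le_exp.2 (by linarith)).trans hy.2.2.1, hy.2.2.2.trans (exp_le_exp.2 hr)⟩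

lemma gOne_mem_centredBox (hL : 0 ≤ L) (hr : 0 ≤ r) : ((0, 0, 1) : G) ∈ centredBox L r := by
  simpa [centredBox, hr] using div_nonneg hL zero_le_two

lemma horizDistSq_mem_Icc (hL : 0 ≤ L) (hs : 64 * L ≤ s) (hx : x.1 ^ 2 + x.2.1 ^ 2 = s ^ 2)
    (hy : y ∈ centredBox L r) : horizDistSq x y ∈ Icc (s ^ 2 / 4) (3 * s ^ 2) := by
  obtain ⟨h₁, h₂⟩ := sq_le_of_mem_centredBox hy
  have hL₂ : (64 * L) ^ 2 ≤ s ^ 2 := by gcongr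
  unfold horizDistSq
  constructor
  · nlinarith only [sq_nonneg (x.1 - 2 * y.1), sq_nonneg (x.2.1 - 2 * y.2.1), hx, h₁, h₂, hL₂]
  · nlinarith only [sq_nonneg (x.1 + y.1), sq_nonneg (x.2.1 + y.2.1), hx, h₁, h₂, hL₂]

lemma horizDistSq_le (hx : x.1 ^ 2 + x.2.1 ^ 2 ≤ s ^ 2) (hL : 0 ≤ L) (hs : L ≤ s)
    (hy : y ∈ centredBox L r) : horizDistSq x y ≤ 3 * s ^ 2 := by
  obtain ⟨h₁, h₂⟩ := sq_le_of_mem_centredBox hy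
  have hL₂ : L ^ 2 ≤ s ^ 2 := by gcongr
  unfold horizDistSq
  nlinarith only [sq_nonneg (x.1 + y.1), sq_nonneg (x.2.1 + y.2.1), hx, h₁, h₂, hL₂]

lemma abs_sub_sq_sub_sub_sq_le {u p p' : ℝ} (hs : L ≤ s) (hu : |u| ≤ s) (hp : |p| ≤ L / 2)
    (hp' : |p'| ≤ L / 2) : |(u - p) ^ 2 - (u - p') ^ 2| ≤ 3 * (L * s) := by
  have hL : 0 ≤ L := by linarith [abs_nonneg p]
  rw [show (u - p) ^ 2 - (u - p') ^ 2 = (p' - p) * (2 * u - p - p') by ring, abs_mul]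
  rw [abs_le] at hu hp hp'
  have h₁ : |p' - p| ≤ L := abs_le.2 ⟨by linarith, by linarith⟩
  have h₂ : |2 * u - p - p'| ≤ 3 * s := abs_le.2 ⟨by linarith, by linarith⟩
  calc |p' - p| * |2 * u - p - p'| ≤ L * (3 * s) := by gcongr
    _ = 3 * (L * s) := by ring

lemma abs_horizDistSq_sub_le (hL : 0 ≤ L) (hs : L ≤ s) (hx : x.1 ^ 2 + x.2.1 ^ 2 = s ^ 2)
    (hy : y ∈ centredBox L r) (hy' : y' ∈ centredBox L r) :
    |horizDistSq x y - horizDistSq x y'| ≤ 6 * (L * s) := by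
  have hs₀ : 0 ≤ s := hL.trans hs
  have hx₁ : |x.1| ≤ s := abs_le_of_sq_le_sq (by linarith [sq_nonneg x.2.1]) hs₀
  have hx₂ : |x.2.1| ≤ s := abs_le_of_sq_le_sq (by linarith [sq_nonneg x.1]) hs₀
  unfold horizDistSq
  rw [add_sub_add_comm]
  calc _ ≤ 3 * (L * s) + 3 * (L * s) := (abs_add_le _ _).trans <| add_le_add
        (abs_sub_sq_sub_sub_sq_le hs hx₁ hy.1 hy'.1)
        (abs_sub_sq_sub_sub_sq_le hs hx₂ hy.2.1 hy'.2.1)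
    _ = 6 * (L * s) := by ring

end BoxGeometry

section NearEstimates

variable {a b q q' l h N : ℝ}

lemma abs_add_add_mul_le {x₁ x₂ x₃ y₁ y₂ y₃ : ℝ} (hl : 0 ≤ l) (hh : 0 ≤ h)
    (hx : x₁ ^ 2 + x₂ ^ 2 + x₃ ^ 2 = l ^ 2) (hy : y₁ ^ 2 + y₂ ^ 2 + y₃ ^ 2 ≤ h ^ 2) :
    |x₁ * y₁ + x₂ * y₂ + x₃ * y₃| ≤ l * h := by
  refine abs_le_of_sq_le_sq ?_ (by positivity)
  calc (x₁ * y₁ + x₂ * y₂ + x₃ * y₃) ^ 2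
      ≤ (x₁ ^ 2 + x₂ ^ 2 + x₃ ^ 2) * (y₁ ^ 2 + y₂ ^ 2 + y₃ ^ 2) := by
        nlinarith only [sq_nonneg (x₁ * y₂ - x₂ * y₁), sq_nonneg (x₁ * y₃ - x₃ * y₁),
          sq_nonneg (x₂ * y₃ - x₃ * y₂)]
    _ ≤ l ^ 2 * h ^ 2 := by
        rw [hx]
        gcongr
    _ = (l * h) ^ 2 := (mul_pow l h 2).symm

lemma abs_sq_dist_sub_sq_le {x₁ x₂ x₃ y₁ y₂ y₃ : ℝ} (hh : 0 ≤ h) (hhl : 4 * h ≤ l)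
    (hx : x₁ ^ 2 + x₂ ^ 2 + x₃ ^ 2 = l ^ 2) (hy : y₁ ^ 2 + y₂ ^ 2 + y₃ ^ 2 ≤ h ^ 2) :
    |(x₁ - y₁) ^ 2 + (x₂ - y₂) ^ 2 + (x₃ - y₃) ^ 2 - l ^ 2| ≤ 5 / 2 * (l * h) := by
  have cauchy_schwarz := abs_le.1 (abs_add_add_mul_le (by linarith) hh hx hy)
  have sq_le : h ^ 2 ≤ l * h / 2 := by nlinarith only [hh, hhl]
  have := sq_nonneg y₁
  have := sq_nonneg y₂
  have := sq_nonneg y₃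
  rw [← hx, abs_le]
  constructor <;> linarith [cauchy_schwarz.1, cauchy_schwarz.2]

lemma scaledSinh_sq_eq_mul (hq : 0 ≤ q) :
    scaledSinh a b q ^ 2 = ((a - b) ^ 2 + q) * ((a + b) ^ 2 + q) := by
  rw [scaledSinh_sq hq]
  ring

lemma one_lt_coshDist_of_sq_pos (ha : 0 < a) (hb : 0 < b) (h : 0 < (a - b) ^ 2 + q) :
    1 < coshDist a b q := by
  unfold coshDist
  rw [one_lt_div (by positivity)]
  linarith

lemma one_le_sq_mul_add (hN : 0 < N) (haN : 1 ≤ N * a) (hq : 0 ≤ q) :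
    1 ≤ N ^ 2 * (a ^ 2 + q) := calc
  (1 : ℝ) ≤ (N * a) ^ 2 := one_le_pow₀ haN
  _ ≤ N ^ 2 * (a ^ 2 + q) := by
    rw [mul_pow]
    gcongr
    linarith

lemma div_le_scaledSinh_of_near (ha : 0 < a) (hb : 0 < b) (hq : 0 ≤ q) (hN : 0 < N) (hl : 0 < l)
    (haN : 1 ≤ N * a) (hE : l ^ 2 / 4 ≤ (a - b) ^ 2 + q) :
    l / (2 * N) ≤ scaledSinh a b q := by
  refine (sq_le_sq₀ (by positivity) (scaledSinh_nonneg _ _ _)).1 ?_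
  rw [scaledSinh_sq_eq_mul hq]
  have inv_sq_le : 1 / N ^ 2 ≤ (a + b) ^ 2 + q := by
    rw [div_le_iff₀' (by positivity)]
    refine (one_le_sq_mul_add hN haN hq).trans ?_
    gcongr
    exact le_add_of_nonneg_right hb.le
  calc (l / (2 * N)) ^ 2 = l ^ 2 / 4 * (1 / N ^ 2) := by field_simp; norm_num
    _ ≤ _ := by gcongr

lemma div_le_hypDist_of_near (ha : 0 < a) (hb : 0 < b) (hq : 0 ≤ q) (hN : 0 < N) (hl : 0 < l)
    (haN : a ≤ N) (hbN : b ≤ N) (haN' : 1 ≤ N * a) (hlN : l ≤ N)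
    (hE : (a - b) ^ 2 + q ∈ Icc (l ^ 2 / 4) (3 * l ^ 2)) :
    l / (20 * N ^ 3) ≤ hypDist a b q := by
  have hD : a ^ 2 + b ^ 2 + q ≤ 5 * N ^ 2 := by
    have : a * b ≤ N * N := by gcongr
    have : l ^ 2 ≤ N ^ 2 := by gcongr
    linarith [hE.2]
  have hS := div_le_scaledSinh_of_near ha hb hq hN hl haN' hE.1
  refine le_trans ?_ (scaledSinh_div_le_hypDist ha hb hq)
  calc l / (20 * N ^ 3) = l / (2 * N) / (2 * (5 * N ^ 2)) := by field_simp; norm_num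
    _ ≤ scaledSinh a b q / (2 * (a ^ 2 + b ^ 2 + q)) := by
        have := scaledSinh_nonneg a b q
        gcongr

lemma abs_coshNumerator_sub_le_of_near (ha : 0 < a) (haN : a ≤ N) (hlN : l ≤ N) (hh : 0 ≤ h)
    (hbh : |b - 1| ≤ h) (hEE : |((a - b) ^ 2 + q) - ((a - 1) ^ 2 + q')| ≤ 5 / 2 * (l * h))
    {k : ℝ} (hk : 0 ≤ k) :
    |((a - b) ^ 2 + q + k * (a * b)) - ((a - 1) ^ 2 + q' + k * (a * 1))|
      ≤ (5 / 2 + k) * (N * h) := by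
  calc _ = |(((a - b) ^ 2 + q) - ((a - 1) ^ 2 + q')) + k * a * (b - 1)| := by ring_nf
    _ ≤ 5 / 2 * (l * h) + k * a * |b - 1| := by
        refine (abs_add_le _ _).trans (add_le_add hEE (le_of_eq ?_))
        rw [abs_mul, abs_of_nonneg (mul_nonneg hk ha.le)]
    _ ≤ 5 / 2 * (N * h) + k * N * h := by
        have hN : 0 ≤ N := ha.le.trans haN
        gcongr
    _ = (5 / 2 + k) * (N * h) := by ring

lemma abs_sub_mul_le_of_sq_eq_mul {S S' E E' P P' m : ℝ} (hS : S ^ 2 = E * P)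
    (hS' : S' ^ 2 = E' * P') (hm : m ≤ S + S') (hP : 0 ≤ P) (hE' : 0 ≤ E') :
    |S - S'| * m ≤ |E - E'| * P + E' * |P - P'| := calc
  |S - S'| * m ≤ |S - S'| * |S + S'| := by
      gcongr
      exact hm.trans (le_abs_self _)
  _ = |(E - E') * P + E' * (P - P')| := by
      rw [← abs_mul]
      congr 1
      linear_combination hS - hS'
  _ ≤ |E - E'| * P + E' * |P - P'| := by
      refine (abs_add_le _ _).trans_eq ?_
      rw [abs_mul, abs_mul, abs_of_nonneg hP, abs_of_nonneg hE']

lemma abs_scaledSinh_sub_le_of_near (ha : 0 < a) (hb : 0 < b) (hN : 1 ≤ N) (hq : 0 ≤ q)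
    (hq' : 0 ≤ q') (hl : 0 < l) (haN : a ≤ N) (hbN : b ≤ N) (haN' : 1 ≤ N * a) (hlN : l ≤ N)
    (hE : (a - b) ^ 2 + q ∈ Icc (l ^ 2 / 4) (3 * l ^ 2)) (hE' : (a - 1) ^ 2 + q' = l ^ 2)
    (hh : 0 ≤ h) (hbh : |b - 1| ≤ h)
    (hEE : |((a - b) ^ 2 + q) - ((a - 1) ^ 2 + q')| ≤ 5 / 2 * (l * h)) :
    |scaledSinh a b q - scaledSinh a 1 q'| ≤ 24 * N ^ 3 * h := by
  have hN₀ : 0 < N := by linarith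
  have hPP := abs_coshNumerator_sub_le_of_near ha haN hlN hh hbh hEE (zero_le_four (α := ℝ))
  have hS := div_le_scaledSinh_of_near ha hb hq hN₀ hl haN' hE.1
  have hS' := div_le_scaledSinh_of_near (b := 1) ha one_pos hq' hN₀ hl haN'
    (by rw [hE']; linarith [sq_nonneg l])
  have hP : (a - b) ^ 2 + q + 4 * (a * b) ≤ 7 * N ^ 2 := by
    have : a * b ≤ N * N := by gcongr
    have : l ^ 2 ≤ N ^ 2 := by gcongr
    linarith [hE.2]
  have hsq : scaledSinh a b q ^ 2 = ((a - b) ^ 2 + q) * ((a - b) ^ 2 + q + 4 * (a * b)) := by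
    rw [scaledSinh_sq_eq_mul hq]
    ring
  have hsq' : scaledSinh a 1 q' ^ 2 = ((a - 1) ^ 2 + q') * ((a - 1) ^ 2 + q' + 4 * (a * 1)) := by
    rw [scaledSinh_sq_eq_mul hq']
    ring
  rw [hE'] at hEE hPP hsq'
  have : 0 ≤ (a - b) ^ 2 + q := le_trans (by positivity) hE.1
  have hsum : l / N ≤ scaledSinh a b q + scaledSinh a 1 q' := calc
    l / N = l / (2 * N) + l / (2 * N) := by field_simp; norm_num
    _ ≤ _ := add_le_add hS hS'
  refine le_of_mul_le_mul_right ?_ (by positivity : 0 < l / N)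
  refine (abs_sub_mul_le_of_sq_eq_mul hsq hsq' hsum (by positivity) (sq_nonneg l)).trans ?_
  calc _ ≤ 5 / 2 * (l * h) * (7 * N ^ 2) + l * N * ((5 / 2 + 4) * (N * h)) := by
        have : l ^ 2 ≤ l * N := by
          rw [sq]
          gcongr
        gcongr
    _ = 24 * N ^ 3 * h * (l / N) := by field_simp; ring

lemma log_sub_log_le_mul {U V M d : ℝ} (hU : 0 < U) (hV : 0 < V) (hMV : 1 ≤ M * V)
    (hUV : |U - V| ≤ d) : log U - log V ≤ M * d := by
  have hd : 0 ≤ d := (abs_nonneg _).trans hUV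
  rw [← log_div hU.ne' hV.ne']
  refine (log_le_sub_one_of_pos (div_pos hU hV)).trans ?_
  rw [div_sub_one hV.ne', div_le_iff₀ hV]
  calc U - V ≤ d * 1 := by rw [mul_one]; exact (le_abs_self _).trans hUV
    _ ≤ d * (M * V) := by gcongr
    _ = M * d * V := by ring

lemma abs_log_sub_log_le_mul {U V M d : ℝ} (hU : 0 < U) (hV : 0 < V) (hMU : 1 ≤ M * U)
    (hMV : 1 ≤ M * V) (hUV : |U - V| ≤ d) : |log U - log V| ≤ M * d :=
  abs_sub_le_iff.2
    ⟨log_sub_log_le_mul hU hV hMV hUV, log_sub_log_le_mul hV hU hMU (by rwa [abs_sub_comm])⟩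

lemma one_le_sq_mul_add_scaledSinh (hN : 0 < N) (haN : 1 ≤ N * a) (hq : 0 ≤ q) :
    1 ≤ N ^ 2 * (a ^ 2 + b ^ 2 + q + scaledSinh a b q) := by
  have := one_le_sq_mul_add hN haN
    (add_nonneg (add_nonneg (sq_nonneg b) hq) (scaledSinh_nonneg a b q))
  rwa [← add_assoc, ← add_assoc] at this

lemma abs_hypDist_sub_le_of_near (ha : 0 < a) (hb : 0 < b) (hN : 1 ≤ N) (hq : 0 ≤ q)
    (hq' : 0 ≤ q') (haN : a ≤ N) (haN' : 1 ≤ N * a) (hlN : l ≤ N) (hh : 0 ≤ h)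
    (hbh : |b - 1| ≤ h) (hlogb : |log b| ≤ h)
    (hEE : |((a - b) ^ 2 + q) - ((a - 1) ^ 2 + q')| ≤ 5 / 2 * (l * h))
    (hSS : |scaledSinh a b q - scaledSinh a 1 q'| ≤ 24 * N ^ 3 * h) :
    |hypDist a b q - hypDist a 1 q'| ≤ 30 * N ^ 5 * h := by
  have hN₀ : 0 < N := by linarith
  have hDD := abs_coshNumerator_sub_le_of_near ha haN hlN hh hbh hEE (zero_le_two (α := ℝ))
  have hM := one_le_sq_mul_add_scaledSinh (b := b) hN₀ haN' hq
  have hM' := one_le_sq_mul_add_scaledSinh (b := 1) hN₀ haN' hq'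
  have hU : 0 < a ^ 2 + b ^ 2 + q + scaledSinh a b q := by
    have := scaledSinh_nonneg a b q
    positivity
  have hV : 0 < a ^ 2 + 1 ^ 2 + q' + scaledSinh a 1 q' := by
    have := scaledSinh_nonneg a 1 q'
    positivity
  have hUV : |(a ^ 2 + b ^ 2 + q + scaledSinh a b q) - (a ^ 2 + 1 ^ 2 + q' + scaledSinh a 1 q')|
      ≤ 29 * N ^ 3 * h := calc
    _ = |(((a - b) ^ 2 + q + 2 * (a * b)) - ((a - 1) ^ 2 + q' + 2 * (a * 1)))
          + (scaledSinh a b q - scaledSinh a 1 q')| := by ring_nf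
    _ ≤ (5 / 2 + 2) * (N * h) + 24 * N ^ 3 * h := (abs_add_le _ _).trans (add_le_add hDD hSS)
    _ ≤ 29 * N ^ 3 * h := by
        have : N * h ≤ N ^ 3 * h := by gcongr; exact le_self_pow₀ hN (by norm_num)
        have : 0 ≤ N * h := by positivity
        linarith
  have hlog := abs_log_sub_log_le_mul hU hV hM hM' hUV
  rw [hypDist_eq_log ha hb, hypDist_eq_log ha one_pos, log_div hU.ne' (by positivity),
    log_div hV.ne' (by positivity), log_mul (by positivity) hb.ne', mul_one]
  calc _ = |(log (a ^ 2 + b ^ 2 + q + scaledSinh a b q)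
          - log (a ^ 2 + 1 ^ 2 + q' + scaledSinh a 1 q')) - log b| := by ring_nf
    _ ≤ N ^ 2 * (29 * N ^ 3 * h) + h := (abs_sub _ _).trans (add_le_add hlog hlogb)
    _ ≤ 30 * N ^ 5 * h := by
        have : h ≤ N ^ 5 * h := le_mul_of_one_le_left hh (one_le_pow₀ hN)
        linarith

lemma abs_heatKer_sub_le_of_near {t : ℝ} (ht : 0 < t) (ha : 0 < a) (hb : 0 < b) (hN : 1 ≤ N)
    (hq : 0 ≤ q) (hq' : 0 ≤ q') (hl : 0 < l) (haN : a ≤ N) (hbN : b ≤ N) (haN' : 1 ≤ N * a)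
    (hlN : l ≤ N) (hE' : (a - 1) ^ 2 + q' = l ^ 2) (hh : 0 ≤ h) (hhl : 4 * h ≤ l)
    (hbh : |b - 1| ≤ h) (hlogb : |log b| ≤ h)
    (hEE : |((a - b) ^ 2 + q) - ((a - 1) ^ 2 + q')| ≤ 5 / 2 * (l * h)) :
    |heatKer t a b q - heatKer t a 1 q'| ≤ 488 * heatConst * (520000 * N ^ 15) * h / l ^ 4 := by
  have hc := heatConst_pos
  have hN₀ : 0 < N := by linarith
  have hl₂ : 0 < l ^ 2 := by positivity
  have mul_le : l * h ≤ l ^ 2 / 4 := by nlinarith only [hh, hhl]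
  have hE : (a - b) ^ 2 + q ∈ Icc (l ^ 2 / 4) (3 * l ^ 2) := by
    rw [hE', abs_le] at hEE
    constructor <;> linarith [hEE.1, hEE.2]
  have hE'_mem : (a - 1) ^ 2 + q' ∈ Icc (l ^ 2 / 4) (3 * l ^ 2) := by
    rw [hE']
    constructor <;> linarith
  have sinh_sub_le := abs_scaledSinh_sub_le_of_near ha hb hN hq hq' hl haN hbN haN' hlN hE hE' hh
    hbh hEE
  have dist_sub_le := abs_hypDist_sub_le_of_near ha hb hN hq hq' haN haN' hlN hh hbh hlogb hEE
    sinh_sub_le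
  refine (abs_heatKer_sub_le ht ha hb one_pos
    (one_lt_coshDist_of_sq_pos ha hb ((by positivity : 0 < l ^ 2 / 4).trans_le hE.1))
    (one_lt_coshDist_of_sq_pos ha one_pos (hE' ▸ hl₂)) (by positivity)
    (div_le_hypDist_of_near ha hb hq hN₀ hl haN hbN haN' hlN hE)
    (div_le_hypDist_of_near ha one_pos hq' hN₀ hl haN hN haN' hlN hE'_mem) (by positivity)
    (div_le_scaledSinh_of_near ha hb hq hN₀ hl haN' hE.1)
    (div_le_scaledSinh_of_near ha one_pos hq' hN₀ hl haN' hE'_mem.1)).trans ?_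
  calc _ ≤ 488 * heatConst * (30 * N ^ 5 * h / ((l / (20 * N ^ 3)) ^ 3 * (l / (2 * N)))
        + 24 * N ^ 3 * h / ((l / (20 * N ^ 3)) ^ 2 * (l / (2 * N)) ^ 2)) := by gcongr
    _ = 488 * heatConst * (480000 * N ^ 15 + 38400 * N ^ 11) * h / l ^ 4 := by field_simp; ring
    _ ≤ 488 * heatConst * (520000 * N ^ 15) * h / l ^ 4 := by
      gcongr
      have : N ^ 11 ≤ N ^ 15 := pow_le_pow_right₀ hN (by norm_num)
      have : 0 ≤ N ^ 15 := by positivity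
      linarith

end NearEstimates

section AtomConvolution

/-- Functions of mean zero supported in `B` with `‖A‖₁ ≤ 1`. Unlike the atoms of `H¹`, they satisfy
no size condition, so that `B` may be enlarged. -/
structure IsL1Atom (A : G → ℝ) (B : Set G) : Prop where
  integrable : Integrable A ρG
  support : ∀ y ∉ B, A y = 0
  integral_abs_le : ∫ y, |A y| ∂ρG ≤ 1
  integral_eq_zero : ∫ y, A y ∂ρG = 0

variable {A : G → ℝ} {B : Set G} {L r t : ℝ} {x : G}

lemma IsL1Atom.mono {B' : Set G} (hA : IsL1Atom A B) (hB : B ⊆ B') : IsL1Atom A B' :=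
  { hA with support := fun y hy => hA.support y fun h => hy (hB h) }

lemma centredBox_eq_prod (L r : ℝ) : centredBox L r
    = Icc (-(L / 2)) (L / 2) ×ˢ (Icc (-(L / 2)) (L / 2) ×ˢ Icc (exp (-r)) (exp r)) := by
  ext y
  simp only [centredBox, mem_ofPred_eq, mem_prod, mem_Icc, abs_le, and_assoc]

lemma measurableSet_centredBox (L r : ℝ) : MeasurableSet (centredBox L r) := by
  rw [centredBox_eq_prod]
  exact measurableSet_Icc.prod (measurableSet_Icc.prod measurableSet_Icc)

lemma rhoG_centredBox (hL : 0 ≤ L) : ρG (centredBox L r) = ENNReal.ofReal (2 * r * L ^ 2) := by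
  simpa [centredBox_eq_prod] using rhoG_Icc_prod_Icc_prod_Icc ((0, 0, 1) : G) one_pos hL

lemma IsCentredAtom.isL1Atom (hA : IsCentredAtom A L r) (hL : 0 < L) (hr : 0 < r) :
    IsL1Atom A (centredBox L r) := by
  refine ⟨hA.integrable, hA.support, ?_, hA.integral_eq_zero⟩
  have le_indicator : ∀ᵐ y ∂ρG, ENNReal.ofReal |A y|
      ≤ (centredBox L r).indicator (fun _ => ENNReal.ofReal (2 * r * L ^ 2)⁻¹) y := by
    filter_upwards [hA.ae_abs_le] with y hy
    by_cases h : y ∈ centredBox L r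
    · rw [indicator_of_mem h]
      exact ENNReal.ofReal_le_ofReal hy
    · simp [indicator_of_notMem h, hA.support y h]
  rw [← ENNReal.ofReal_le_ofReal_iff zero_le_one, ofReal_integral_eq_lintegral_ofReal
    hA.integrable.abs (Eventually.of_forall fun _ => abs_nonneg _)]
  refine (lintegral_mono_ae le_indicator).trans_eq ?_
  rw [lintegral_indicator_const (measurableSet_centredBox L r), rhoG_centredBox hL.le,
    ← ENNReal.ofReal_mul (by positivity), inv_mul_cancel₀ (by positivity)]

lemma IsL1Atom.abs_convHeat_le (hA : IsL1Atom A B) (hB : B.Nonempty) (ht : 0 < t)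
    (hx : 0 < x.2.2) {K₀ k : ℝ}
    (h : ∀ y ∈ B, |heatKer t x.2.2 y.2.2 (horizDistSq x y) - K₀| ≤ k) :
    |convHeat A t x| ≤ k := by
  obtain ⟨y₀, hy₀⟩ := hB
  have hk : 0 ≤ k := (abs_nonneg _).trans (h y₀ hy₀)
  have subtract : convHeat A t x
      = ∫ y, A y * (heatKer t x.2.2 y.2.2 (horizDistSq x y) - K₀) ∂ρG := by
    simp_rw [convHeat_eq_integral_heatKer hA.integrable.1 t hx, mul_sub]
    rw [integral_sub (integrable_mul_heatKer hA.integrable ht hx) (hA.integrable.mul_const K₀),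
      integral_mul_const, hA.integral_eq_zero, zero_mul, sub_zero]
  calc |convHeat A t x| ≤ ∫ y, |A y| * k ∂ρG := by
        rw [subtract, ← Real.norm_eq_abs]
        refine norm_integral_le_of_norm_le (hA.integrable.abs.mul_const k)
          (Eventually.of_forall fun y => ?_)
        rw [Real.norm_eq_abs, abs_mul]
        by_cases hy : y ∈ B
        · exact mul_le_mul_of_nonneg_left (h y hy) (abs_nonneg _)
        · simp [hA.support y hy]
    _ ≤ 1 * k := by
        rw [integral_mul_const]
        exact mul_le_mul_of_nonneg_right hA.integral_abs_le hk
    _ = k := one_mul k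

lemma IsL1Atom.maxHeat_le (hA : IsL1Atom A B) (hB : B.Nonempty) (hx : 0 < x.2.2) {k : ℝ}
    (h : ∀ t > 0, ∃ K₀, ∀ y ∈ B, |heatKer t x.2.2 y.2.2 (horizDistSq x y) - K₀| ≤ k) :
    maxHeat A x ≤ ENNReal.ofReal k :=
  iSup₂_le fun t ht =>
    have ⟨_, hK₀⟩ := h t ht
    ENNReal.ofReal_le_ofReal (hA.abs_convHeat_le hB ht hx hK₀)

lemma IsCentredAtom.ofReal_abs_convHeat_le (hA : IsCentredAtom A L r) (ht : 0 < t)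
    (hx : 0 < x.2.2) {F : G → ℝ≥0∞} (hF : Measurable F)
    (h : ∀ y ∈ centredBox L r, ENNReal.ofReal (heatKer t x.2.2 y.2.2 (horizDistSq x y)) ≤ F y) :
    ENNReal.ofReal |convHeat A t x| ≤ ENNReal.ofReal (2 * r * L ^ 2)⁻¹ * ∫⁻ y, F y ∂ρG := by
  rw [convHeat_eq_integral_heatKer hA.integrable.1 t hx, ← Real.norm_eq_abs, ofReal_norm,
    ← lintegral_const_mul _ hF]
  refine (enorm_integral_le_lintegral_enorm _).trans (lintegral_mono_ae ?_)
  filter_upwards [hA.ae_abs_le, ae_rhoG_pos] with y hy hpos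
  by_cases hyB : y ∈ centredBox L r
  · rw [enorm_mul, Real.enorm_eq_ofReal_abs,
      Real.enorm_of_nonneg (heatKer_nonneg ht.le hx hpos (horizDistSq_nonneg x y))]
    exact mul_le_mul' (ENNReal.ofReal_le_ofReal hy) (h y hyB)
  · simp [hA.support y hyB]

lemma IsCentredAtom.maxHeat_le_inv (hA : IsCentredAtom A L r) (hx : 0 < x.2.2) :
    maxHeat A x ≤ ENNReal.ofReal (2 * r * L ^ 2)⁻¹ :=
  iSup₂_le fun t ht => by
    simpa [lintegral_heatKer ht hx] using hA.ofReal_abs_convHeat_le ht hx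
      (measurable_heatKer_right t x).ennreal_ofReal fun _ _ => le_rfl

@[fun_prop] lemma measurable_horizDistSq (x : G) : Measurable (horizDistSq x) := by
  unfold horizDistSq
  fun_prop

lemma setLIntegral_horizDistSq {F : ℝ → ℝ≥0∞} (hF : Measurable F) (x : G) (r : ℝ) :
    ∫⁻ y in {y : G | y.2.2 ∈ Icc (exp (-r)) (exp r)}, F (horizDistSq x y) ∂ρG
      = ENNReal.ofReal (2 * r) * (ENNReal.ofReal π * ∫⁻ q in Ioi 0, F q) := by
  have hS : MeasurableSet {y : G | y.2.2 ∈ Icc (exp (-r)) (exp r)} :=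
    measurableSet_Icc.preimage (by fun_prop)
  have slice : ∀ s : ℝ, ∫⁻ p : ℝ × ℝ, {y : G | y.2.2 ∈ Icc (exp (-r)) (exp r)}.indicator
      (fun y => F (horizDistSq x y)) (expChart (p, s))
      = (Icc (-r) r).indicator (fun _ => ENNReal.ofReal π * ∫⁻ q in Ioi 0, F q) s := fun s => by
    have mem_iff : ∀ p : ℝ × ℝ,
        expChart (p, s) ∈ {y : G | y.2.2 ∈ Icc (exp (-r)) (exp r)} ↔ s ∈ Icc (-r) r := fun p => by
      simp only [expChart, mem_ofPred_eq, mem_Icc, exp_le_exp]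
    by_cases hs : s ∈ Icc (-r) r
    · simp only [indicator_of_mem hs, indicator_of_mem ((mem_iff _).2 hs)]
      rw [← lintegral_sq_add_sq hF]
      exact lintegral_sub_left_eq_self (fun p : ℝ × ℝ => F (p.1 ^ 2 + p.2 ^ 2)) (x.1, x.2.1)
    · simp only [indicator_of_notMem hs, indicator_of_notMem (mt (mem_iff _).1 hs), lintegral_zero]
  rw [← lintegral_indicator hS, lintegral_rhoG (Measurable.indicator (by fun_prop) hS),
    lintegral_congr slice, lintegral_indicator_const measurableSet_Icc, Real.volume_Icc, mul_comm]
  ring_nf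

/-- A kernel of size `c / (ε + q)` is dominated, for `q ≤ T`, by an integrable function of `q` with
integral of order `log ((ε + T) / ε)`. -/
lemma div_add_le_inv_add_sub_inv_add {c ε T q : ℝ} (hc : 0 ≤ c) (hε : 0 < ε) (hεT : ε ≤ T)
    (hq : 0 ≤ q) (hqT : q ≤ T) : c / (ε + q) ≤ 3 * c * (1 / (ε + q) - 1 / (ε + T + q)) := by
  have hT : 0 < T := hε.trans_le hεT
  have third_le : 1 / 3 ≤ T / (ε + T + q) := by
    rw [div_le_div_iff₀ (by norm_num) (by positivity)]
    linarith
  calc c / (ε + q) = 3 * c * (1 / (ε + q) * (1 / 3)) := by ring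
    _ ≤ 3 * c * (1 / (ε + q) * (T / (ε + T + q))) := by gcongr
    _ = _ := by
      field_simp
      ring

lemma IsCentredAtom.maxHeat_le_log (hA : IsCentredAtom A L r) (hL : 0 < L) (hr : 0 < r)
    (hx : 0 < x.2.2) {c ε T : ℝ} (hc : 0 ≤ c) (hε : 0 < ε) (hεT : ε ≤ T)
    (hT : ∀ y ∈ centredBox L r, horizDistSq x y ≤ T)
    (h : ∀ t > 0, ∀ y ∈ centredBox L r,
      heatKer t x.2.2 y.2.2 (horizDistSq x y) ≤ c / (ε + horizDistSq x y)) :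
    maxHeat A x ≤ ENNReal.ofReal (3 * π * c * log ((ε + T) / ε) / L ^ 2) := by
  set F : ℝ → ℝ≥0∞ := fun q => ENNReal.ofReal (3 * c) *
    ENNReal.ofReal (1 / (ε + q) - 1 / (ε + T + q)) with hF
  set S : Set G := {y | y.2.2 ∈ Icc (exp (-r)) (exp r)}
  have hSm : MeasurableSet S := measurableSet_Icc.preimage (by fun_prop)
  refine iSup₂_le fun t ht => (hA.ofReal_abs_convHeat_le ht hx
    (F := S.indicator fun y => F (horizDistSq x y)) (Measurable.indicator (by fun_prop) hSm)
    fun y hy => ?_).trans_eq ?_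
  · have hyS : y ∈ S := exp_mem_Icc_of_mem_centredBox hy
    simp only [indicator_of_mem hyS, hF, ← ENNReal.ofReal_mul (mul_nonneg zero_le_three hc)]
    exact ENNReal.ofReal_le_ofReal <| (h t ht y hy).trans <|
      div_add_le_inv_add_sub_inv_add hc hε hεT (horizDistSq_nonneg x y) (hT y hy)
  · rw [lintegral_indicator hSm, setLIntegral_horizDistSq (by fun_prop), hF,
      lintegral_const_mul _ (by fun_prop), lintegral_Ioi_inv_add_sub_inv_add hε (by linarith),
      ← ENNReal.ofReal_mul (by positivity), ← ENNReal.ofReal_mul (by positivity),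
      ← ENNReal.ofReal_mul (by positivity), ← ENNReal.ofReal_mul (by positivity)]
    congr 1
    field_simp

end AtomConvolution

section LocalEstimate

variable {a q r L t : ℝ} {x y : G}

lemma exp_neg_mul_abs_log_le {V : ℝ} (ha : 0 < a) (hv : |log a| ≤ V) :
    exp (-V) * |log a| ≤ |a - 1| := by
  obtain ⟨h₁, h₂⟩ := abs_le.1 hv
  have hV : exp (-V) ≤ 1 := exp_le_one_iff.2 (by linarith [abs_nonneg (log a)])
  rcases le_total 0 (log a) with h | h
  · rw [abs_of_nonneg h]
    calc exp (-V) * log a ≤ 1 * log a := by gcongr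
      _ ≤ a - 1 := by linarith [log_le_sub_one_of_pos ha]
      _ ≤ |a - 1| := le_abs_self _
  · have hVa : exp (-V) ≤ a := (le_log_iff_exp_le ha).1 h₁
    rw [abs_of_nonpos h]
    have log_le : -log a ≤ a⁻¹ - 1 := log_inv a ▸ log_le_sub_one_of_pos (inv_pos.2 ha)
    calc exp (-V) * -log a ≤ a * (a⁻¹ - 1) := mul_le_mul hVa log_le (neg_nonneg.2 h) ha.le
      _ = -(a - 1) := by
          field_simp
          ring
      _ ≤ |a - 1| := neg_le_abs _

lemma exp_neg_mul_add_sq_log_le {V : ℝ} (ha : 0 < a) (hv : |log a| ≤ V) (hq : 0 ≤ q) :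
    exp (-(2 * V)) * (q + log a ^ 2) ≤ (a - 1) ^ 2 + q := by
  have h := pow_le_pow_left₀ (by positivity) (exp_neg_mul_abs_log_le ha hv) 2
  rw [mul_pow, sq_abs, sq_abs, ← exp_nat_mul, show ((2 : ℕ) : ℝ) * -V = -(2 * V) by
    push_cast; ring] at h
  have hV : exp (-(2 * V)) ≤ 1 := exp_le_one_iff.2 (by linarith [abs_nonneg (log a)])
  linarith [mul_le_of_le_one_left hq hV]

lemma abs_sub_one_le_three_mul {b : ℝ} (hr : 0 ≤ r) (hr₁ : r ≤ 1)
    (hb : b ∈ Icc (exp (-r)) (exp r)) : |b - 1| ≤ 3 * r := by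
  have exp_sub_one_le : exp r - 1 ≤ 3 * r := calc
    exp r - 1 ≤ exp r * r := by
      have := mul_le_mul_of_nonneg_left (add_one_le_exp (-r)) (exp_pos r).le
      rw [← exp_add, add_neg_cancel, exp_zero] at this
      linarith
    _ ≤ 3 * r := by
      gcongr
      linarith [exp_le_exp.2 hr₁, exp_one_lt_d9]
  exact abs_le.2 ⟨by linarith [hb.1, add_one_le_exp (-r)], by linarith [hb.2]⟩

lemma abs_log_le_of_mem_centredBox (hy : y ∈ centredBox L r) : |log y.2.2| ≤ r :=
  have hb := height_pos_of_mem_centredBox hy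
  abs_le.2 ⟨(le_log_iff_exp_le hb).2 hy.2.2.1, (log_le_iff_le_exp hb).2 hy.2.2.2⟩

lemma sq_add_sq_add_sq_le_of_mem_centredBox (hr : 0 ≤ r) (hr₁ : r ≤ 1) (hL : L ≤ exp 8 * r)
    (hy : y ∈ centredBox L r) :
    y.1 ^ 2 + y.2.1 ^ 2 + (y.2.2 - 1) ^ 2 ≤ (exp 8 * r) ^ 2 := by
  obtain ⟨h₁, h₂⟩ := sq_le_of_mem_centredBox hy
  have hL₀ : 0 ≤ L := by linarith [abs_nonneg y.1, hy.1]
  have h₃ : (y.2.2 - 1) ^ 2 ≤ (3 * r) ^ 2 :=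
    sq_le_sq.2 ((abs_sub_one_le_three_mul hr hr₁ hy.2.2).trans (le_abs_self _))
  have hL₂ : L ^ 2 ≤ (exp 8 * r) ^ 2 := by gcongr
  have hr₂ : (9 * r) ^ 2 ≤ (exp 8 * r) ^ 2 := by
    gcongr
    linarith [add_one_le_exp (8 : ℝ)]
  linarith [sq_nonneg r]

/-- The constant in the local estimate `abs_heatKer_sub_le_local`. -/
def localConst : ℝ := 488 * heatConst * (520000 * exp 40 ^ 15) * exp 8 * (4 * exp 80)

lemma localConst_pos : 0 < localConst := by
  have := heatConst_pos
  unfold localConst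
  positivity

lemma sq_add_le_exp_forty_sq (ha : 0 < a) (ha₂₀ : a ≤ exp 20) (hq : q ≤ exp 76) :
    (a - 1) ^ 2 + q ≤ exp 40 ^ 2 := by
  have one_le : 1 ≤ exp 20 := one_le_exp (by norm_num)
  have hsq : (a - 1) ^ 2 ≤ exp 20 ^ 2 := sq_le_sq' (by linarith) (by linarith)
  have h₂₀ : exp 20 ^ 2 ≤ exp 76 := by
    rw [← exp_nat_mul]
    exact exp_le_exp.2 (by norm_num)
  have h₄₀ : exp 40 ^ 2 = exp 76 * exp 4 := by
    rw [← exp_nat_mul, ← exp_add]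
    norm_num
  nlinarith only [hsq, hq, h₂₀, h₄₀, add_one_le_exp (4 : ℝ), exp_pos 76]

lemma sq_le_mul_pow_four {l v : ℝ} (hl : exp (-40) * (q + v ^ 2) ≤ l ^ 2) (hq : 0 ≤ q)
    (hr : r ^ 2 ≤ q + v ^ 2) : (r ^ 2 + v ^ 2 + q) ^ 2 ≤ 4 * exp 80 * l ^ 4 := by
  rw [exp_neg, inv_mul_le_iff₀ (exp_pos _)] at hl
  calc (r ^ 2 + v ^ 2 + q) ^ 2 ≤ (2 * (exp 40 * l ^ 2)) ^ 2 := by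
        gcongr
        linarith
    _ = 4 * exp 80 * l ^ 4 := by
        rw [show (80 : ℝ) = (2 : ℕ) * 40 by norm_num, exp_nat_mul]
        ring

lemma exists_euclidean_distance (ha : 0 < a) (hv : |log a| ≤ 20) (hq₀ : 0 ≤ q)
    (hq : q ≤ exp 76) (hfar : exp 60 * r ^ 2 ≤ q + log a ^ 2) :
    ∃ l, (a - 1) ^ 2 + q = l ^ 2 ∧ exp 10 * r ≤ l ∧ l ≤ exp 40 ∧
      (r ^ 2 + log a ^ 2 + q) ^ 2 ≤ 4 * exp 80 * l ^ 4 := by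
  have ha₂₀ : a ≤ exp 20 := (log_le_iff_le_exp ha).1 (abs_le.1 hv).2
  have hl : (a - 1) ^ 2 + q = √((a - 1) ^ 2 + q) ^ 2 := (sq_sqrt (by positivity)).symm
  have sq_ge : exp (-40) * (q + log a ^ 2) ≤ (a - 1) ^ 2 + q := by
    rw [show (40 : ℝ) = 2 * 20 by norm_num]
    exact exp_neg_mul_add_sq_log_le ha hv hq₀
  have hr_sq : r ^ 2 ≤ q + log a ^ 2 :=
    (le_mul_of_one_le_left (sq_nonneg r) (one_le_exp (by norm_num))).trans hfar
  refine ⟨√((a - 1) ^ 2 + q), hl, le_sqrt_of_sq_le ?_,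
    sqrt_le_iff.2 ⟨(exp_pos _).le, sq_add_le_exp_forty_sq ha ha₂₀ hq⟩,
    sq_le_mul_pow_four (hl ▸ sq_ge) hq₀ hr_sq⟩
  calc (exp 10 * r) ^ 2 = exp (-40) * (exp 60 * r ^ 2) := by
        rw [mul_pow, ← mul_assoc, ← exp_add, ← exp_nat_mul]
        norm_num
    _ ≤ exp (-40) * (q + log a ^ 2) := by gcongr
    _ ≤ (a - 1) ^ 2 + q := sq_ge

/-- On a bounded region of `G` the distance to `e` is comparable with the Euclidean one, `l` below;
this is the classical Calderón–Zygmund estimate for a kernel with gradient of size `l⁻⁴`. -/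
lemma abs_heatKer_sub_le_local (ht : 0 < t) (hx : 0 < x.2.2) (hr : 0 < r) (hr₁ : r ≤ 1)
    (hL : L ≤ exp 8 * r) (hq : x.1 ^ 2 + x.2.1 ^ 2 ≤ exp 76) (hv : |log x.2.2| ≤ 20)
    (hfar : exp 60 * r ^ 2 ≤ x.1 ^ 2 + x.2.1 ^ 2 + log x.2.2 ^ 2) (hy : y ∈ centredBox L r) :
    |heatKer t x.2.2 y.2.2 (horizDistSq x y) - heatKer t x.2.2 1 (x.1 ^ 2 + x.2.1 ^ 2)|
      ≤ localConst * r / (r ^ 2 + log x.2.2 ^ 2 + (x.1 ^ 2 + x.2.1 ^ 2)) ^ 2 := by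
  have hc := heatConst_pos
  have hq₀ : 0 ≤ x.1 ^ 2 + x.2.1 ^ 2 := by positivity
  have ha_le : x.2.2 ≤ exp 40 := (log_le_iff_le_exp hx).1 (by linarith [(abs_le.1 hv).2])
  have one_le_mul : 1 ≤ exp 40 * x.2.2 := by
    rw [← inv_mul_le_iff₀ (exp_pos _), mul_one, ← exp_neg, ← le_log_iff_exp_le hx]
    linarith [(abs_le.1 hv).1]
  obtain ⟨l, hl, l_ge, l_le, sq_le⟩ := exists_euclidean_distance hx hv hq₀ hq hfar
  have hl₀ : 0 < l := lt_of_lt_of_le (by positivity) l_ge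
  have hr_exp : r ≤ exp 8 * r := le_mul_of_one_le_left hr.le (one_le_exp (by norm_num))
  have three_mul_le : 3 * r ≤ exp 8 * r := by
    gcongr
    linarith [add_one_le_exp (8 : ℝ)]
  have four_mul_le : 4 * (exp 8 * r) ≤ l := by
    refine le_trans ?_ l_ge
    rw [show (10 : ℝ) = 2 + 8 by norm_num, exp_add, mul_assoc]
    gcongr
    exact four_le_exp_two
  have sq_sub := abs_sq_dist_sub_sq_le (by positivity) four_mul_le
    (show x.1 ^ 2 + x.2.1 ^ 2 + (x.2.2 - 1) ^ 2 = l ^ 2 by rw [← hl]; ring)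
    (sq_add_sq_add_sq_le_of_mem_centredBox hr.le hr₁ hL hy)
  rw [← horizDistSq, ← hl, add_comm (horizDistSq x y), sub_sub_sub_cancel_right] at sq_sub
  refine (abs_heatKer_sub_le_of_near ht hx (height_pos_of_mem_centredBox hy)
    (one_le_exp (by norm_num)) (horizDistSq_nonneg x y) hq₀ hl₀ ha_le
    (hy.2.2.2.trans (exp_le_exp.2 (by linarith))) one_le_mul l_le hl (by positivity) four_mul_le
    ((abs_sub_one_le_three_mul hr.le hr₁ hy.2.2).trans three_mul_le)
    ((abs_log_le_of_mem_centredBox hy).trans hr_exp) sq_sub).trans ?_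
  rw [div_le_div_iff₀ (by positivity) (by positivity)]
  calc _ ≤ 488 * heatConst * (520000 * exp 40 ^ 15) * (exp 8 * r) * (4 * exp 80 * l ^ 4) := by
        gcongr
    _ = localConst * r * l ^ 4 := by
        rw [localConst]
        ring

end LocalEstimate

section RegionIntegrals

variable {Φ : G → ℝ≥0∞}

lemma IsMajorized.of_radial_strip {g : ℝ → ℝ≥0∞} (hg : Measurable g) {T : ℝ} {S : Set ℝ}
    (hS : MeasurableSet S)
    (hΦ : ∀ x : G, 0 < x.2.2 → x.1 ^ 2 + x.2.1 ^ 2 ≤ T → log x.2.2 ∈ S → Φ x ≤ g (log x.2.2)) :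
    IsMajorized Φ (ρG.restrict (radial ⁻¹' (Iic T ×ˢ S)))
      (ENNReal.ofReal π * (ENNReal.ofReal T * ∫⁻ v in S, g v)) :=
  IsMajorized.of_radial (measurableSet_Iic.prod hS) (F := fun p => g p.2) (by fun_prop)
    (fun x hx hU => hΦ x hx hU.1 hU.2) (setLIntegral_Iic_prod hg T S).le

lemma setLIntegral_Ioi_prod_univ {F : ℝ × ℝ → ℝ≥0∞} (hF : Measurable F) {T : ℝ} (hT : 0 ≤ T) :
    ∫⁻ p in Ioi T ×ˢ univ, F p ∂(volume.restrict (Ioi (0 : ℝ))).prod volume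
      = ∫⁻ q in Ioi T, ∫⁻ v, F (q, v) := by
  rw [← Measure.prod_restrict, lintegral_prod _ (by fun_prop), Measure.restrict_univ,
    Measure.restrict_restrict measurableSet_Ioi, Ioi_inter_Ioi, sup_of_le_left hT]

lemma lintegral_mul_div_sq_add_sq_add_sq {c r : ℝ} (hc : 0 ≤ c) (hr : 0 < r) :
    ∫⁻ p : ℝ × ℝ, ENNReal.ofReal (c * r / (r ^ 2 + p.2 ^ 2 + p.1) ^ 2)
      ∂(volume.restrict (Ioi (0 : ℝ))).prod volume = ENNReal.ofReal (c * π) := by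
  have slice : ∀ v : ℝ, ∫⁻ q in Ioi (0 : ℝ), ENNReal.ofReal (c * r / (r ^ 2 + v ^ 2 + q) ^ 2)
      = ENNReal.ofReal (c * r) * ENNReal.ofReal (1 / (r ^ 2 + (v - 0) ^ 2)) := fun v => by
    simp only [div_eq_mul_one_div (c * r), ENNReal.ofReal_mul (mul_nonneg hc hr.le)]
    rw [lintegral_const_mul _ (by fun_prop), lintegral_Ioi_inv_add_sq (by positivity), sub_zero]
  rw [lintegral_prod_symm _ (by fun_prop), lintegral_congr slice,
    lintegral_const_mul _ (by fun_prop), lintegral_inv_sq_add_sub_sq hr,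
    ← ENNReal.ofReal_mul (by positivity)]
  congr 1
  field_simp

end RegionIntegrals

section RegionEstimates

/-- The square of the radius `κL`, with `κ = e³⁰`, outside of which the cancellation of an atom
supported in a box of side `L` is exploited. -/
def cutoffSq (L : ℝ) : ℝ := (exp 30 * L) ^ 2

variable {A : G → ℝ} {L r R : ℝ}

lemma sixtyFour_le_exp_thirty : (64 : ℝ) ≤ exp 30 := calc
  (64 : ℝ) ≤ exp 15 * exp 15 := by nlinarith [add_one_le_exp (15 : ℝ)]
  _ = exp 30 := by
    rw [← exp_add]
    norm_num

lemma cutoffSq_nonneg (L : ℝ) : 0 ≤ cutoffSq L := sq_nonneg _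

lemma sq_le_cutoffSq (hL : 0 ≤ L) : L ^ 2 ≤ cutoffSq L := by
  unfold cutoffSq
  gcongr
  exact le_mul_of_one_le_left hL (one_le_exp (by norm_num))

lemma IsCentredAtom.isMajorized_near (hA : IsCentredAtom A L r) (hL : 0 < L) (hr : 0 < r) :
    IsMajorized (maxHeat A)
      (ρG.restrict (radial ⁻¹' (Iic (cutoffSq L) ×ˢ Icc (-(exp 30 * r)) (exp 30 * r))))
      (ENNReal.ofReal (π * exp 30 ^ 3)) := by
  refine (IsMajorized.of_radial_strip measurable_const measurableSet_Icc
    fun x hx _ _ => hA.maxHeat_le_inv hx).mono EventuallyLE.rfl (le_of_eq ?_)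
  rw [setLIntegral_const, Real.volume_Icc, ← ENNReal.ofReal_mul (by positivity),
    ← ENNReal.ofReal_mul (cutoffSq_nonneg L), ← ENNReal.ofReal_mul pi_pos.le, cutoffSq]
  congr 1
  field_simp
  ring

lemma IsL1Atom.isMajorized_top (hA : IsL1Atom A (centredBox L R)) (hL₀ : 0 < L) (hR : 1 ≤ R)
    (hL : L ≤ exp (8 * R)) :
    IsMajorized (maxHeat A) (ρG.restrict (radial ⁻¹' (Iic (cutoffSq L) ×ˢ Ici (20 * R))))
      (ENNReal.ofReal (π * (exp 30 ^ 2 * (488 * heatConst)))) := by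
  have hc := heatConst_pos
  refine (IsMajorized.of_radial_strip
    (g := fun v => ENNReal.ofReal (976 * heatConst * exp (-(2 * v)))) (by fun_prop)
    measurableSet_Ici fun x hx _ hv => ?_).mono EventuallyLE.rfl ?_
  · refine hA.maxHeat_le ⟨_, gOne_mem_centredBox hL₀.le (by linarith)⟩ hx fun t ht =>
      ⟨0, fun y hy => ?_⟩
    have hq := horizDistSq_nonneg x y
    have hb := height_pos_of_mem_centredBox hy
    rw [sub_zero, abs_of_nonneg (heatKer_nonneg ht.le hx hb hq)]
    exact heatKer_le_of_le_log ht hR hx hb hy.2.2.2 hq hv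
  · have sq_mul_exp_le : L ^ 2 * exp (-(2 * (20 * R))) ≤ 1 := calc
      _ ≤ exp (8 * R) ^ 2 * exp (-(2 * (20 * R))) := by gcongr
      _ = exp (-(24 * R)) := by
        rw [← exp_nat_mul, ← exp_add]
        ring_nf
      _ ≤ 1 := exp_le_one_iff.2 (by linarith)
    rw [lintegral_Ici_mul_exp two_pos (by positivity), ← ENNReal.ofReal_mul (cutoffSq_nonneg L),
      ← ENNReal.ofReal_mul pi_pos.le]
    refine ENNReal.ofReal_le_ofReal (mul_le_mul_of_nonneg_left ?_ pi_pos.le)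
    calc _ = exp 30 ^ 2 * (488 * heatConst) * (L ^ 2 * exp (-(2 * (20 * R)))) := by
          rw [cutoffSq]
          ring
      _ ≤ exp 30 ^ 2 * (488 * heatConst) * 1 := by gcongr
      _ = _ := mul_one _

lemma isMajorized_cusp_of_le {Φ : G → ℝ≥0∞} {k : ℝ} (hk : 0 ≤ k) (hL : 0 < L) (hR : 0 < R)
    (hΦ : ∀ x : G, 0 < x.2.2 → x.1 ^ 2 + x.2.1 ^ 2 ≤ cutoffSq L → log x.2.2 ≤ -(20 * R) →
      Φ x ≤ ENNReal.ofReal (k * R / L ^ 2 / log x.2.2 ^ 2)) :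
    IsMajorized Φ (ρG.restrict (radial ⁻¹' (Iic (cutoffSq L) ×ˢ Iic (-(20 * R)))))
      (ENNReal.ofReal (π * (exp 30 ^ 2 * (k / 20)))) := by
  refine (IsMajorized.of_radial_strip (g := fun v => ENNReal.ofReal (k * R / L ^ 2 / v ^ 2))
    (by fun_prop) measurableSet_Iic hΦ).mono EventuallyLE.rfl (le_of_eq ?_)
  rw [lintegral_Iic_neg_div_sq (by positivity) (by positivity),
    ← ENNReal.ofReal_mul (cutoffSq_nonneg L), ← ENNReal.ofReal_mul pi_pos.le, cutoffSq]
  congr 1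
  field_simp

lemma IsL1Atom.isMajorized_cusp (hA : IsL1Atom A (centredBox L R)) (hL : 0 < L) (hR : 1 ≤ R) :
    IsMajorized (maxHeat A) (ρG.restrict (radial ⁻¹' (Iic (cutoffSq L) ×ˢ Iic (-(20 * R)))))
      (ENNReal.ofReal (π * (exp 30 ^ 2 * (3904 * heatConst * exp (2 * R) * L ^ 2 / R / 20)))) := by
  have hc := heatConst_pos
  have hR₀ : 0 < R := by linarith
  refine isMajorized_cusp_of_le (by positivity) hL hR₀ fun x hx _ hv => ?_
  refine hA.maxHeat_le ⟨_, gOne_mem_centredBox hL.le hR₀.le⟩ hx fun t ht => ⟨0, fun y hy => ?_⟩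
  have hq := horizDistSq_nonneg x y
  have hb := height_pos_of_mem_centredBox hy
  have hv₀ : 0 < log x.2.2 ^ 2 := sq_pos_of_neg (by linarith)
  rw [sub_zero, abs_of_nonneg (heatKer_nonneg ht.le hx hb hq)]
  calc _ ≤ 3904 * heatConst / (log x.2.2 ^ 2 * (exp (-(2 * R)) + horizDistSq x y)) :=
        heatKer_le_of_log_le ht hR hx hy.2.2.1 hq hv
    _ ≤ 3904 * heatConst / (log x.2.2 ^ 2 * exp (-(2 * R))) := by
        gcongr
        exact le_add_of_nonneg_right hq
    _ = _ := by
        rw [exp_neg]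
        field_simp

lemma log_add_div_le (hR : 1 ≤ R) (hL₁ : 1 ≤ L) (hL : L ≤ exp (8 * R)) :
    log ((exp (-(2 * R)) + 3 * cutoffSq L) / exp (-(2 * R))) ≤ 80 * R := by
  have hT : 1 ≤ cutoffSq L := (one_le_pow₀ hL₁).trans (sq_le_cutoffSq (by linarith))
  have hε : exp (-(2 * R)) ≤ 1 := exp_le_one_iff.2 (by linarith)
  rw [log_le_iff_le_exp (by positivity), div_le_iff₀ (exp_pos _), ← exp_add]
  calc exp (-(2 * R)) + 3 * cutoffSq L ≤ 4 * cutoffSq L := by linarith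
    _ ≤ exp 2 * (exp 30 * exp (8 * R)) ^ 2 := by
        unfold cutoffSq
        gcongr
        exact four_le_exp_two
    _ = exp (62 + 16 * R) := by
        rw [← exp_add, ← exp_nat_mul, ← exp_add]
        ring_nf
    _ ≤ _ := exp_le_exp.2 (by linarith)

lemma IsCentredAtom.isMajorized_cusp (hA : IsCentredAtom A L R) (hR : 1 ≤ R) (hL₁ : 1 ≤ L)
    (hL : L ≤ exp (8 * R)) :
    IsMajorized (maxHeat A) (ρG.restrict (radial ⁻¹' (Iic (cutoffSq L) ×ˢ Iic (-(20 * R)))))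
      (ENNReal.ofReal (π * (exp 30 ^ 2 * (3904 * heatConst * (240 * π) / 20)))) := by
  have hc := heatConst_pos
  have hL₀ : 0 < L := by linarith
  have hR₀ : 0 < R := by linarith
  have hT : 1 ≤ cutoffSq L := (one_le_pow₀ hL₁).trans (sq_le_cutoffSq hL₀.le)
  have hε : exp (-(2 * R)) ≤ 1 := exp_le_one_iff.2 (by linarith)
  refine isMajorized_cusp_of_le (by positivity) hL₀ hR₀ fun x hx hq hv => ?_
  have hv₀ : 0 < log x.2.2 ^ 2 := sq_pos_of_neg (by linarith)
  refine (hA.maxHeat_le_log (c := 3904 * heatConst / log x.2.2 ^ 2) (T := 3 * cutoffSq L) hL₀ hR₀ hx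
    (by positivity) (exp_pos (-(2 * R))) (by linarith) (fun y hy => ?_) fun t ht y hy => ?_).trans
    (ENNReal.ofReal_le_ofReal ?_)
  · exact horizDistSq_le hq hL₀.le
      (le_mul_of_one_le_left hL₀.le (one_le_exp (by norm_num))) hy
  · rw [div_div]
    exact heatKer_le_of_log_le ht hR hx hy.2.2.1 (horizDistSq_nonneg x y) hv
  · calc _ ≤ 3 * π * (3904 * heatConst / log x.2.2 ^ 2) * (80 * R) / L ^ 2 := by
          gcongr
          exact log_add_div_le hR hL₁ hL
      _ = _ := by ring

end RegionEstimates

section FarRegion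

variable {A : G → ℝ} {L R : ℝ}

/-- The bound of `abs_heatKer_sub_le_of_far` at distance `√q`, as a function of `(q, log a)`. -/
def farBound (L R : ℝ) (p : ℝ × ℝ) : ℝ :=
  488 * heatConst * (1 / (log √p.1 ^ 2 / 4 + (p.2 - log √p.1) ^ 2) *
    (96 * R / (log √p.1 * √p.1 ^ 2) + 15360 * L / √p.1 ^ 3))

lemma cutoffSq_pos (hL : 0 < L) : 0 < cutoffSq L := by
  unfold cutoffSq
  positivity

lemma sqrt_cutoffSq (hL : 0 ≤ L) : √(cutoffSq L) = exp 30 * L :=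
  sqrt_sq (by positivity)

lemma four_mul_le_log_cutoffSq (hL₀ : 0 < L) (hL : exp (2 * R) ≤ L) :
    4 * R ≤ log (cutoffSq L) := by
  have h := (le_log_iff_exp_le hL₀).2 hL
  rw [cutoffSq, log_pow, log_mul (exp_pos _).ne' hL₀.ne', log_exp, Nat.cast_ofNat]
  linarith

lemma IsL1Atom.maxHeat_le_farBound (hA : IsL1Atom A (centredBox L R)) (hR : 1 ≤ R)
    (hL : exp (2 * R) ≤ L) {x : G} (hx : 0 < x.2.2) (hq : cutoffSq L < x.1 ^ 2 + x.2.1 ^ 2) :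
    maxHeat A x ≤ ENNReal.ofReal (farBound L R (radial x)) := by
  have hL₀ : 0 < L := (exp_pos _).trans_le hL
  have hs : x.1 ^ 2 + x.2.1 ^ 2 = √(x.1 ^ 2 + x.2.1 ^ 2) ^ 2 := (sq_sqrt (by positivity)).symm
  have hLs : 64 * L ≤ √(x.1 ^ 2 + x.2.1 ^ 2) := calc
    64 * L ≤ exp 30 * L := by
      gcongr
      exact sixtyFour_le_exp_thirty
    _ = √(cutoffSq L) := (sqrt_cutoffSq hL₀.le).symm
    _ ≤ _ := sqrt_le_sqrt hq.le
  have L_le : L ≤ √(x.1 ^ 2 + x.2.1 ^ 2) := by linarith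
  have hone := gOne_mem_centredBox hL₀.le (zero_le_one.trans hR)
  refine hA.maxHeat_le ⟨_, hone⟩ hx fun t ht =>
    ⟨heatKer t x.2.2 1 (horizDistSq x (0, 0, 1)), fun y hy => ?_⟩
  exact abs_heatKer_sub_le_of_far ht hR hL hLs hx (exp_mem_Icc_of_mem_centredBox hy)
    (exp_mem_Icc_of_mem_centredBox hone) (horizDistSq_mem_Icc hL₀.le hLs hs hy)
    (horizDistSq_mem_Icc hL₀.le hLs hs hone) (abs_horizDistSq_sub_le hL₀.le L_le hs hy hone)

lemma lintegral_farBound_le {q : ℝ} (hL : 0 ≤ L) (hR : 0 ≤ R) (hq : 0 < q) (hlog : 1 ≤ log q) :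
    ∫⁻ v, ENNReal.ofReal (farBound L R (q, v)) ≤ ENNReal.ofReal (976 * π * heatConst *
      (384 * R * (1 / (q * log q ^ 2)) + 30720 * L * (1 / √q ^ 3))) := by
  have hc := heatConst_pos
  have log_sqrt : log √q = log q / 2 := Real.log_sqrt hq.le
  have log_sqrt_pos : 0 < log √q := by linarith
  have factor : ∀ v, ENNReal.ofReal (farBound L R (q, v)) =
      ENNReal.ofReal (488 * heatConst * (96 * R / (log √q * √q ^ 2) + 15360 * L / √q ^ 3)) *
        ENNReal.ofReal (1 / ((log √q / 2) ^ 2 + (v - log √q) ^ 2)) := fun v => by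
    rw [← ENNReal.ofReal_mul (by positivity), farBound, div_pow]
    ring_nf
  simp_rw [factor]
  rw [lintegral_const_mul _ (by fun_prop), lintegral_inv_sq_add_sub_sq (half_pos log_sqrt_pos),
    ← ENNReal.ofReal_mul (by positivity)]
  refine ENNReal.ofReal_le_ofReal ?_
  rw [sq_sqrt hq.le, log_sqrt]
  calc _ = 976 * π * heatConst * (384 * R * (1 / (q * log q ^ 2)) +
        30720 * L * (1 / √q ^ 3) * (1 / log q)) := by
        field_simp
        ring
    _ ≤ _ := by
        refine mul_le_mul_of_nonneg_left (add_le_add_right ?_ _) (by positivity)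
        exact mul_le_of_le_one_right (by positivity) ((div_le_one (by linarith)).2 hlog)

lemma setLIntegral_farBound_le (hR : 1 ≤ R) (hL : exp (2 * R) ≤ L) :
    ∫⁻ q in Ioi (cutoffSq L), ∫⁻ v, ENNReal.ofReal (farBound L R (q, v)) ≤
      ENNReal.ofReal (976 * π * heatConst * 61536) := by
  have hc := heatConst_pos
  have hL₀ : 0 < L := (exp_pos _).trans_le hL
  have hlog := four_mul_le_log_cutoffSq hL₀ hL
  have hT := cutoffSq_pos hL₀
  calc _ ≤ ∫⁻ q in Ioi (cutoffSq L), ENNReal.ofReal (976 * π * heatConst) *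
        (ENNReal.ofReal (384 * R) * ENNReal.ofReal (1 / (q * log q ^ 2)) +
          ENNReal.ofReal (30720 * L) * ENNReal.ofReal (1 / √q ^ 3)) := by
        refine setLIntegral_mono (by fun_prop) fun q hq => ?_
        have hq₀ : 0 < q := hT.trans hq
        refine (lintegral_farBound_le hL₀.le (by linarith) hq₀
          (by linarith [log_le_log hT (le_of_lt hq)])).trans_eq ?_
        rw [← ENNReal.ofReal_mul (by positivity), ← ENNReal.ofReal_mul (by positivity),
          ← ENNReal.ofReal_add (by positivity) (by positivity),
          ← ENNReal.ofReal_mul (by positivity)]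
    _ = ENNReal.ofReal (976 * π * heatConst *
        (384 * R * (1 / log (cutoffSq L)) + 30720 * L * (2 / √(cutoffSq L)))) := by
        have hlog₀ : 0 < log (cutoffSq L) := by linarith
        rw [lintegral_const_mul _ (by fun_prop), lintegral_add_left (by fun_prop),
          lintegral_const_mul _ (by fun_prop), lintegral_const_mul _ (by fun_prop),
          lintegral_Ioi_inv_mul_log_sq ((log_pos_iff hT.le).1 hlog₀),
          lintegral_Ioi_inv_sqrt_cube hT, ← ENNReal.ofReal_mul (by positivity),
          ← ENNReal.ofReal_mul (by positivity), ← ENNReal.ofReal_add (by positivity)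
          (by positivity), ← ENNReal.ofReal_mul (by positivity)]
    _ ≤ _ := by
        refine ENNReal.ofReal_le_ofReal (mul_le_mul_of_nonneg_left ?_ (by positivity))
        have log_term : 384 * R * (1 / log (cutoffSq L)) ≤ 96 := by
          rw [mul_one_div, div_le_iff₀ (by linarith)]
          linarith
        have sqrt_term : 30720 * L * (2 / √(cutoffSq L)) ≤ 61440 := by
          rw [sqrt_cutoffSq hL₀.le, ← mul_div_assoc, div_le_iff₀ (by positivity)]
          nlinarith [sixtyFour_le_exp_thirty]
        linarith

lemma IsL1Atom.isMajorized_far (hA : IsL1Atom A (centredBox L R)) (hR : 1 ≤ R)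
    (hL : exp (2 * R) ≤ L) :
    IsMajorized (maxHeat A) (ρG.restrict (radial ⁻¹' (Ioi (cutoffSq L) ×ˢ univ)))
      (ENNReal.ofReal (π * (976 * π * heatConst * 61536))) := by
  have hmeas : Measurable fun p => ENNReal.ofReal (farBound L R p) := by
    unfold farBound
    fun_prop
  rw [ENNReal.ofReal_mul pi_pos.le]
  refine IsMajorized.of_radial (measurableSet_Ioi.prod MeasurableSet.univ) hmeas
    (fun x hx hU => hA.maxHeat_le_farBound hR hL hx hU.1) ?_
  rw [setLIntegral_Ioi_prod_univ hmeas (cutoffSq_nonneg L)]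
  exact setLIntegral_farBound_le hR hL

end FarRegion

section SmallAtoms

variable {A : G → ℝ} {L r : ℝ}

lemma IsL1Atom.isMajorized_local (hA : IsL1Atom A (centredBox L r)) (hL₀ : 0 < L) (hr : 0 < r)
    (hr₁ : r ≤ 1) (hL : L ≤ exp 8 * r) :
    IsMajorized (maxHeat A) (ρG.restrict (radial ⁻¹' {p | p.1 ≤ exp 76 ∧ |p.2| ≤ 20 ∧
      exp 60 * r ^ 2 ≤ p.1 + p.2 ^ 2})) (ENNReal.ofReal (π * (localConst * π))) := by
  have hU : MeasurableSet {p : ℝ × ℝ | p.1 ≤ exp 76 ∧ |p.2| ≤ 20 ∧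
      exp 60 * r ^ 2 ≤ p.1 + p.2 ^ 2} := by measurability
  rw [ENNReal.ofReal_mul pi_pos.le]
  refine IsMajorized.of_radial hU (F := fun p =>
    ENNReal.ofReal (localConst * r / (r ^ 2 + p.2 ^ 2 + p.1) ^ 2)) (by fun_prop)
    (fun x hx ⟨hq, hv, hfar⟩ => hA.maxHeat_le ⟨_, gOne_mem_centredBox hL₀.le hr.le⟩ hx
      fun t ht => ⟨_, fun y hy => abs_heatKer_sub_le_local ht hx hr hr₁ hL hq hv hfar hy⟩)
    ((setLIntegral_le_lintegral _ _).trans_eq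
      (lintegral_mul_div_sq_add_sq_add_sq localConst_pos.le hr))

end SmallAtoms

section UniformBound

lemma IsMajorized.radial_union {Φ : G → ℝ≥0∞} {U V : Set (ℝ × ℝ)} {C D : ℝ≥0∞}
    (hU : MeasurableSet U) (hV : MeasurableSet V)
    (h₁ : IsMajorized Φ (ρG.restrict (radial ⁻¹' U)) C)
    (h₂ : IsMajorized Φ (ρG.restrict (radial ⁻¹' V)) D) :
    IsMajorized Φ (ρG.restrict (radial ⁻¹' (U ∪ V))) (C + D) :=
  h₁.restrict_union (measurable_radial hU) (measurable_radial hV) h₂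

lemma IsMajorized.of_forall_radial_mem {Φ : G → ℝ≥0∞} {U : Set (ℝ × ℝ)} {C : ℝ≥0∞}
    (hcover : ∀ q v, 0 ≤ q → (q, v) ∈ U) (h : IsMajorized Φ (ρG.restrict (radial ⁻¹' U)) C) :
    IsMajorized Φ ρG C := by
  have preimage_eq : radial ⁻¹' U = univ := eq_univ_of_forall fun x =>
    hcover _ _ (add_nonneg (sq_nonneg x.1) (sq_nonneg x.2.1))
  rwa [preimage_eq, Measure.restrict_univ] at h

lemma exists_isMajorized_of_one_le : ∃ C ≠ ∞, ∀ A L r, 1 ≤ r → exp (2 * r) ≤ L → L ≤ exp (8 * r) →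
    IsCentredAtom A L r → IsMajorized (maxHeat A) ρG C := by
  refine ⟨_, ?_, fun A L r hr hL₁ hL₂ hA =>
    have hr₀ : 0 < r := by linarith
    have hL : 1 ≤ L := (one_le_exp (by linarith)).trans hL₁
    have hL₀ : 0 < L := by linarith
    have hA₁ := hA.isL1Atom hL₀ hr₀
    .of_forall_radial_mem (fun q v _ => ?_) <|
      .radial_union ?_ ?_ (hA.isMajorized_cusp hr hL hL₂) <|
      .radial_union ?_ ?_ (hA.isMajorized_near hL₀ hr₀) <|
      .radial_union ?_ ?_ (hA₁.isMajorized_top hL₀ hr hL₂) (hA₁.isMajorized_far hr hL₁)⟩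
  · finiteness
  · have mul_le : 20 * r ≤ exp 30 * r :=
      mul_le_mul_of_nonneg_right (by linarith [sixtyFour_le_exp_thirty]) hr₀.le
    simp only [mem_union, mem_prod, mem_Iic, mem_Icc, mem_Ici, mem_Ioi, mem_univ]
    grind
  all_goals measurability

/-- Away from `e` a small atom is treated as a function supported in the box of unit scale; its own
scale only matters near `e`. -/
lemma exists_isMajorized_of_lt_one : ∃ C ≠ ∞, ∀ A L r, 0 < r → r < 1 → exp 2 * r ≤ L →
    L ≤ exp 8 * r → IsCentredAtom A L r → IsMajorized (maxHeat A) ρG C := by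
  refine ⟨_, ?_, fun A L r hr hr₁ hL₁ hL₂ hA =>
    have hL₀ : 0 < L := (mul_pos (exp_pos 2) hr).trans_le hL₁
    have hL_le : L ≤ exp 8 := hL₂.trans (mul_le_of_le_one_right (exp_pos 8).le hr₁.le)
    have hA₁ := hA.isL1Atom hL₀ hr
    have hA₂ := hA₁.mono (centredBox_subset hL_le hr₁.le)
    .of_forall_radial_mem (fun q v hq => ?_) <|
      .radial_union ?_ ?_ (hA₂.isMajorized_cusp (exp_pos 8) le_rfl) <|
      .radial_union ?_ ?_ (hA.isMajorized_near hL₀ hr) <|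
      .radial_union ?_ ?_ (hA₁.isMajorized_local hL₀ hr hr₁.le hL₂) <|
      .radial_union ?_ ?_ (hA₂.isMajorized_top (exp_pos 8) le_rfl (by norm_num))
        (hA₂.isMajorized_far le_rfl (exp_le_exp.2 (by norm_num)))⟩
  · finiteness
  · have cutoffSq_eq : cutoffSq (exp 8) = exp 76 := by
      rw [cutoffSq, ← exp_add, ← exp_nat_mul]
      norm_num
    have sq_eq : exp 60 * r ^ 2 = (exp 30 * r) ^ 2 := by
      rw [mul_pow, ← exp_nat_mul]
      norm_num
    have far_of_cutoffSq_lt : cutoffSq L < q → exp 60 * r ^ 2 ≤ q + v ^ 2 := fun h => by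
      have sq_le : (exp 30 * r) ^ 2 ≤ cutoffSq L := by
        unfold cutoffSq
        gcongr
        exact (le_mul_of_one_le_left hr.le (one_le_exp two_pos.le)).trans hL₁
      linarith [sq_nonneg v]
    have far_of_lt_abs : exp 30 * r < |v| → exp 60 * r ^ 2 ≤ q + v ^ 2 := fun h => by
      have sq_le : (exp 30 * r) ^ 2 ≤ |v| ^ 2 := by gcongr
      linarith [sq_abs v]
    simp only [mem_union, mem_prod, mem_Iic, mem_Icc, mem_Ici, mem_Ioi, mem_univ, mem_ofPred_eq,
      cutoffSq_eq, ← abs_le]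
    grind
  all_goals measurability

end UniformBound

theorem heat_maximal_H1_to_L1 :
    ∃ C > (0 : ℝ), ∀ f : G → ℝ, MemH1 f →
      ∫⁻ x, maxHeat f x ∂ρG ≤ ENNReal.ofReal (C * H1norm f) := by
  obtain ⟨C₁, hC₁, hbig⟩ := exists_isMajorized_of_one_le
  obtain ⟨C₂, hC₂, hsmall⟩ := exists_isMajorized_of_lt_one
  have hC : C₁ + C₂ ≤ ENNReal.ofReal ((C₁ + C₂).toReal + 1) :=
    ENNReal.le_ofReal_iff_toReal_le (by finiteness) (by positivity) |>.2 (by linarith)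
  refine ⟨(C₁ + C₂).toReal + 1, by positivity, fun f hf =>
    lintegral_maxHeat_le_mul_H1norm (by positivity) (fun A hA => ?_) hf⟩
  refine hA.isMajorized_maxHeat fun A L r _ hr ⟨hscale_lt, hscale_le⟩ hA => ?_
  rcases lt_or_ge r 1 with h | h
  · exact (hsmall A L r hr h (hscale_lt h).1 (hscale_lt h).2 hA).mono EventuallyLE.rfl
      (le_add_self.trans hC)
  · exact (hbig A L r h (hscale_le h).1 (hscale_le h).2 hA).mono EventuallyLE.rfl
      (le_self_add.trans hC)
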